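/- arXiv:1910.02537 — 5 statements merged into one kernel-verified Lean document; each statement's English description precedes it below -/
import Mathlib

section
/- Let N ≥ 2 and let Ω ⊂ ℝ^N be an open set with finite N-dimensional Lebesgue measure. Let v : Ω → ℝ^N be a Borel measurable vector field. Then for every ε > 0 there exist an open set A ⊆ Ω and a continuously differentiable function φ : Ω → ℝ of class C¹ vanishing at the boundary (φ ∈ C¹₀(Ω), i.e. φ and ∇φ extend continuously by 0 to the boundary), such that ℋ^N(A) ≤ ε·ℋ^N(Ω) and v(x) = ∇φ(x) for every x ∈ Ω ∖ A. -/
open MeasureTheory Filter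

noncomputable section

/-- Euclidean space `ℝ^N`. -/
abbrev Euc (N : ℕ) := EuclideanSpace ℝ (Fin N)

/-- `φ ∈ C¹₀(Ω)`: the class of `C¹` functions on `Ω` which, together with their gradient,
tend to `0` at the boundary of `Ω` (and at infinity); equivalently, the extension of `φ`
by zero outside `Ω` is `C¹` on all of `ℝ^N`, vanishes together with its derivative
outside `Ω`, and `φ` and `∇φ` vanish at infinity. -/
def MemC1Zero {N : ℕ} (Ω : Set (Euc N)) (φ : Euc N → ℝ) : Prop :=
  ContDiff ℝ 1 φ ∧ (∀ x ∉ Ω, φ x = 0 ∧ fderiv ℝ φ x = 0) ∧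
  Tendsto (fun x => |φ x| + ‖fderiv ℝ φ x‖) (cocompact (Euc N)) (nhds 0)

section LusinGradient

open Metric Set Topology
open scoped ENNReal

/-- A measurable map is bounded off a set of small measure. -/
lemma exists_nat_measure_norm_gt_le {F : Type*} [NormedAddCommGroup F] [MeasurableSpace F]
    [OpensMeasurableSpace F] {α : Type*} [MeasurableSpace α] {ν : Measure α} {Ω : Set α}
    (hΩ : MeasurableSet Ω) (hfin : ν Ω ≠ ∞) {v : α → F} (hv : Measurable v) {δ : ℝ≥0∞}
    (hδ : δ ≠ 0) : ∃ n : ℕ, ν (Ω ∩ {x | (n : ℝ) < ‖v x‖}) ≤ δ := by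
  have hlim := tendsto_measure_iInter_atTop (μ := ν) (s := fun n : ℕ => Ω ∩ {x | (n : ℝ) < ‖v x‖})
    (fun n => (hΩ.inter (measurableSet_lt measurable_const hv.norm)).nullMeasurableSet)
    (fun m n hmn x hx => ⟨hx.1, (Nat.cast_le (α := ℝ).2 hmn).trans_lt hx.2.out⟩)
    ⟨0, ((measure_mono inter_subset_left).trans_lt hfin.lt_top).ne⟩
  have hempty : ⋂ n : ℕ, Ω ∩ {x | (n : ℝ) < ‖v x‖} = ∅ := by
    refine eq_empty_of_forall_notMem fun x hx => ?_
    obtain ⟨n, hn⟩ := exists_nat_ge ‖v x‖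
    exact hn.not_gt (mem_iInter.1 hx n).2
  rw [hempty, measure_empty] at hlim
  exact (hlim.eventually_le_const (pos_iff_ne_zero.2 hδ)).exists

variable {E : Type*} [NormedAddCommGroup E] [NormedSpace ℝ E]

lemma sum_eq_of_mem_of_tsupport_subset {ι : Type*} {u : Finset ι} {f : ι → E → ℝ}
    {K : ι → Set E} (hf : ∀ i ∈ u, Differentiable ℝ (f i)) (hK : (u : Set ι).PairwiseDisjoint K)
    (hfK : ∀ i ∈ u, tsupport (f i) ⊆ K i) {i : ι} (hi : i ∈ u) {y : E} (hy : y ∈ K i) :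
    ∑ j ∈ u, f j y = f i y ∧ fderiv ℝ (fun y => ∑ j ∈ u, f j y) y = fderiv ℝ (f i) y := by
  have hne : ∀ j ∈ u, j ≠ i → y ∉ tsupport (f j) := fun j hj hji hyj =>
    disjoint_left.1 (hK hj hi hji) (hfK j hj hyj) hy
  rw [fderiv_fun_sum fun j hj => hf j hj y]
  exact ⟨Finset.sum_eq_single i
      (fun j hj hji => image_eq_zero_of_notMem_tsupport (hne j hj hji)) (absurd hi),
    Finset.sum_eq_single i
      (fun j hj hji => fderiv_of_notMem_tsupport ℝ (hne j hj hji)) (absurd hi)⟩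

variable [FiniteDimensional ℝ E]

/-- A linear form can be cut off outside a ball, keeping it unchanged on a slightly smaller ball,
at the cost of a constant factor on the derivative that does not depend on the ball. -/
lemma exists_cutoff_linear {s : ℝ} (hs : 0 < s) (hs1 : s < 1) :
    ∃ C : ℝ, 0 ≤ C ∧ ∀ (x : E) (r : ℝ) (a : E →L[ℝ] ℝ), 0 < r →
      ∃ f : E → ℝ, ContDiff ℝ 1 f ∧ tsupport f ⊆ closedBall x r ∧
        (∀ y, |f y| ≤ ‖a‖ * r) ∧ (∀ y, ‖fderiv ℝ f y‖ ≤ C * ‖a‖) ∧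
        ∀ y ∈ ball x (s * r), fderiv ℝ f y = a := by
  let ψ : ContDiffBump (0 : E) := ⟨s, 1, hs, hs1⟩
  have hψ : ContDiff ℝ 1 ψ := ψ.contDiff
  obtain ⟨L, hL⟩ := (ψ.hasCompactSupport.fderiv (𝕜 := ℝ)).exists_bound_of_continuous
    (hψ.continuous_fderiv one_ne_zero)
  have hL0 : 0 ≤ L := (norm_nonneg _).trans (hL 0)
  refine ⟨1 + L, by positivity, fun x r a hr => ?_⟩
  have hscale (y : E) : ‖r⁻¹ • (y - x)‖ = dist y x / r := by
    rw [norm_smul, norm_inv, Real.norm_of_nonneg hr.le, dist_eq_norm]; ring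
  have hout (y : E) (hy : r ≤ dist y x) : ψ (r⁻¹ • (y - x)) = 0 := by
    apply ψ.zero_of_le_dist
    rw [dist_zero_right, hscale]
    exact (one_le_div hr).2 hy
  have hdiff (y : E) : HasFDerivAt (fun y => a (y - x) * ψ (r⁻¹ • (y - x)))
      (a (y - x) • (fderiv ℝ ψ (r⁻¹ • (y - x))).comp (r⁻¹ • ContinuousLinearMap.id ℝ E) +
        ψ (r⁻¹ • (y - x)) • a) y := by
    have h1 : HasFDerivAt (fun y : E => y - x) (ContinuousLinearMap.id ℝ E) y :=
      (hasFDerivAt_id y).sub_const x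
    have h2 : HasFDerivAt (fun y => a (y - x)) a y := by
      have := a.hasFDerivAt.comp y h1
      rwa [ContinuousLinearMap.comp_id] at this
    exact h2.mul (((hψ.differentiable one_ne_zero) _).hasFDerivAt.comp y (h1.const_smul r⁻¹))
  refine ⟨fun y => a (y - x) * ψ (r⁻¹ • (y - x)), ?_, ?_, fun y => ?_, fun y => ?_,
    fun y hy => ?_⟩
  · exact (a.contDiff.comp (contDiff_id.sub contDiff_const)).mul
      (hψ.comp ((contDiff_id.sub contDiff_const).const_smul r⁻¹))
  · refine closure_minimal (fun y hy => ?_) isClosed_closedBall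
    by_contra hyr
    rw [mem_closedBall, not_le] at hyr
    exact hy (by simp [hout y hyr.le])
  · rcases le_total r (dist y x) with h | h
    · simp only [hout y h, mul_zero, abs_zero]
      positivity
    · rw [abs_mul, abs_of_nonneg ψ.nonneg]
      calc |a (y - x)| * ψ (r⁻¹ • (y - x)) ≤ |a (y - x)| * 1 := by gcongr; exact ψ.le_one
        _ ≤ ‖a‖ * ‖y - x‖ := by rw [mul_one]; exact a.le_opNorm _
        _ ≤ ‖a‖ * r := by gcongr; rwa [← dist_eq_norm]
  · rw [(hdiff y).fderiv]
    rcases lt_or_ge r (dist y x) with h | h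
    · have h0 : fderiv ℝ ψ (r⁻¹ • (y - x)) = 0 := by
        apply fderiv_of_notMem_tsupport
        rw [ψ.tsupport_eq, mem_closedBall, dist_zero_right, hscale, not_le]
        exact (one_lt_div hr).2 h
      rw [h0, hout y h.le]
      simp only [ContinuousLinearMap.zero_comp, smul_zero, zero_smul, add_zero, norm_zero]
      positivity
    · have hax : |a (y - x)| ≤ ‖a‖ * r :=
        (a.le_opNorm _).trans (by gcongr; rwa [← dist_eq_norm])
      have hcomp : ‖(fderiv ℝ ψ (r⁻¹ • (y - x))).comp (r⁻¹ • ContinuousLinearMap.id ℝ E)‖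
          ≤ L * r⁻¹ := by
        refine (ContinuousLinearMap.opNorm_comp_le _ _).trans ?_
        gcongr
        · exact hL _
        · rw [norm_smul, norm_inv, Real.norm_of_nonneg hr.le]
          exact mul_le_of_le_one_right (by positivity) ContinuousLinearMap.norm_id_le
      calc _ ≤ ‖a‖ * r * (L * r⁻¹) + 1 * ‖a‖ := by
            refine (norm_add_le _ _).trans ?_
            rw [norm_smul, norm_smul, Real.norm_eq_abs, Real.norm_of_nonneg ψ.nonneg]
            gcongr
            exact ψ.le_one
        _ = (1 + L) * ‖a‖ := by field_simp; ring
  · have hmem : r⁻¹ • (y - x) ∈ ball (0 : E) ψ.rIn := by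
      rw [mem_ball, dist_zero_right, hscale, div_lt_iff₀ hr]
      exact hy
    have h1 : ψ =ᶠ[𝓝 (r⁻¹ • (y - x))] 1 := ψ.eventuallyEq_one_of_mem_ball hmem
    rw [(hdiff y).fderiv, h1.fderiv_eq, h1.eq_of_nhds, Pi.one_def]
    simp

variable [MeasurableSpace E] [BorelSpace E] (μ : Measure E) [μ.IsAddHaarMeasure]

/-- Up to small measure, an open set is a finite disjoint union of small closed balls on most of
each of which a given measurable map is close to its value at the center. -/
lemma exists_finset_closedBall_almost_constant {F : Type*} [PseudoMetricSpace F]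
    [SecondCountableTopology F] [Nonempty F] [MeasurableSpace F] [OpensMeasurableSpace F]
    {Ω : Set E} (hΩ : IsOpen Ω)
    (hfin : μ Ω ≠ ∞) (hpos : μ Ω ≠ 0) {w : E → F} (hw : Measurable w) {ε : ℝ≥0∞} (hε : ε ≠ 0)
    {η R : ℝ} (hη : 0 < η) (hR : 0 < R) :
    ∃ (t : Finset E) (r : E → ℝ),
      (∀ x ∈ t, 0 < r x ∧ r x < R ∧ closedBall x (r x) ⊆ Ω ∧
        μ (closedBall x (r x) \ {y | dist (w y) (w x) ≤ η}) ≤ ε * μ (closedBall x (r x))) ∧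
      (t : Set E).PairwiseDisjoint (fun x => closedBall x (r x)) ∧
      μ (Ω \ ⋃ x ∈ t, closedBall x (r x)) ≤ ε * μ Ω := by
  let d := TopologicalSpace.denseSeq F
  let T : ℕ → Set E := fun n => {x | dist (w x) (d n) < η / 2}ᶜ
  have hT (n : ℕ) : MeasurableSet (T n) :=
    (hw (isOpen_ball (x := d n) (ε := η / 2)).measurableSet).compl
  have hae : ∀ᵐ x ∂μ, ∀ n, Tendsto
      (fun r => μ (T n ∩ closedBall x r) / μ (closedBall x r)) (𝓝[>] 0)
      (𝓝 ((T n).indicator 1 x)) :=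
    ae_all_iff.2 fun n => Besicovitch.ae_tendsto_measure_inter_div_of_measurableSet μ (hT n)
  set D : Set E := {x | ∀ n, Tendsto
      (fun r => μ (T n ∩ closedBall x r) / μ (closedBall x r)) (𝓝[>] 0)
      (𝓝 ((T n).indicator 1 x))}
  let good : E → Set ℝ := fun x => {r | closedBall x r ⊆ Ω ∧
    μ (closedBall x r \ {y | dist (w y) (w x) ≤ η}) ≤ ε * μ (closedBall x r)}
  have hgood : ∀ x ∈ Ω ∩ D, ∀ δ > 0, (good x ∩ Ioo 0 δ).Nonempty := by
    rintro x ⟨hxΩ, hxD⟩ δ hδ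
    obtain ⟨n, hn⟩ : ∃ n, dist (w x) (d n) < η / 2 := by
      simpa using (TopologicalSpace.denseRange_denseSeq F).exists_dist_lt (w x) (half_pos hη)
    have h0 : (T n).indicator (1 : E → ℝ≥0∞) x = 0 :=
      indicator_of_notMem (by simpa [T] using hn) _
    have h1 := hxD n
    rw [h0] at h1
    have h2 := h1.eventually_lt_const (pos_iff_ne_zero.2 hε)
    have h3 : ∀ᶠ r in 𝓝[>] (0 : ℝ), closedBall x r ⊆ Ω :=
      nhdsWithin_le_nhds (eventually_closedBall_subset (hΩ.mem_nhds hxΩ))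
    obtain ⟨r, hr2, hr3, hr4⟩ := (h2.and (h3.and (Ioo_mem_nhdsGT hδ))).exists
    refine ⟨r, ⟨hr3, ?_⟩, hr4⟩
    have hb : μ (closedBall x r) ≠ 0 := (measure_closedBall_pos μ x hr4.1).ne'
    have ht : μ (closedBall x r) ≠ ∞ := measure_closedBall_lt_top.ne
    refine (measure_mono fun y hy => ?_).trans ((ENNReal.div_le_iff hb ht).1 hr2.le)
    refine ⟨fun hyn => hy.2 ?_, hy.1⟩
    have := dist_triangle_right (w y) (w x) (d n)
    simp only [mem_ofPred_eq] at hyn ⊢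
    linarith
  obtain ⟨t, r, htc, hts, htr, hcov, hdisj⟩ :=
    Besicovitch.exists_disjoint_closedBall_covering_ae μ good (Ω ∩ D) hgood (fun _ => R)
      fun _ _ => hR
  have hcov' : μ (Ω \ ⋃ x ∈ t, closedBall x (r x)) = 0 := by
    refine measure_mono_null (t := ((Ω ∩ D) \ ⋃ x ∈ t, closedBall x (r x)) ∪ Dᶜ) ?_
      (measure_union_null hcov hae)
    rintro x ⟨hx, hx'⟩
    by_cases hxD : x ∈ D
    · exact Or.inl ⟨⟨hx, hxD⟩, hx'⟩
    · exact Or.inr hxD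
  have := htc.to_subtype
  have hsum : ∑' x : t, μ (closedBall (x : E) (r x)) ≠ ∞ := by
    rw [← measure_biUnion htc hdisj fun _ _ => measurableSet_closedBall]
    exact ((measure_mono (iUnion₂_subset fun x hx => (htr x hx).1.1)).trans_lt
      hfin.lt_top).ne
  obtain ⟨u, hu⟩ := ((ENNReal.tendsto_tsum_compl_atTop_zero hsum).eventually_lt_const
    (pos_iff_ne_zero.2 (mul_ne_zero hε hpos))).exists
  refine ⟨u.map (Function.Embedding.subtype _), r, ?_, ?_, ?_⟩
  · intro x hx
    simp only [Finset.mem_map, Function.Embedding.subtype_apply, Subtype.exists,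
      exists_and_right, exists_eq_right] at hx
    obtain ⟨hxt, -⟩ := hx
    exact ⟨(htr x hxt).2.1, (htr x hxt).2.2, (htr x hxt).1.1, (htr x hxt).1.2⟩
  · refine hdisj.subset ?_
    intro x hx
    simp only [Finset.coe_map, Function.Embedding.subtype_apply, mem_image] at hx
    obtain ⟨y, -, rfl⟩ := hx
    exact y.2
  · calc _ ≤ μ ((Ω \ ⋃ x ∈ t, closedBall x (r x)) ∪
          ⋃ x : {x // x ∉ u}, closedBall (x : E) (r x)) := by
          refine measure_mono ?_
          rintro y ⟨hyΩ, hyu⟩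
          by_cases hy : y ∈ ⋃ x ∈ t, closedBall x (r x)
          · obtain ⟨x, hx, hyx⟩ := mem_iUnion₂.1 hy
            refine Or.inr (mem_iUnion.2 ⟨⟨⟨x, hx⟩, fun hxu => hyu ?_⟩, hyx⟩)
            exact mem_iUnion₂.2 ⟨x, Finset.mem_map.2 ⟨⟨x, hx⟩, hxu, rfl⟩, hyx⟩
          · exact Or.inl ⟨hyΩ, hy⟩
      _ ≤ 0 + ∑' x : {x // x ∉ u}, μ (closedBall (x : E) (r x)) := by
          refine (measure_union_le _ _).trans ?_
          rw [hcov']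
          gcongr
          exact measure_iUnion_le _
      _ ≤ ε * μ Ω := by rw [zero_add]; exact hu.le

variable [Nontrivial E]

/-- A bounded measurable field of linear forms is approximated, off a set of small measure, by the
derivative of a compactly supported `C¹` function, with a uniform bound on that derivative. -/
lemma exists_contDiff_fderiv_approx {ε : ℝ≥0∞} (hε : ε ≠ 0) :
    ∃ C : ℝ, 0 ≤ C ∧ ∀ Ω : Set E, IsOpen Ω → μ Ω ≠ ∞ → μ Ω ≠ 0 →
      ∀ (w : E → E →L[ℝ] ℝ) (M η : ℝ), Measurable w → (∀ x, ‖w x‖ ≤ M) → 0 < η →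
      ∃ (φ : E → ℝ) (G : Set E), ContDiff ℝ 1 φ ∧ HasCompactSupport φ ∧ tsupport φ ⊆ Ω ∧
        (∀ y, |φ y| ≤ η) ∧ (∀ y, ‖fderiv ℝ φ y‖ ≤ C * M) ∧ MeasurableSet G ∧
        μ (Ω \ G) ≤ ε * μ Ω ∧ ∀ x ∈ G, ‖w x - fderiv ℝ φ x‖ ≤ η := by
  have hε3 : ε / 3 ≠ 0 := (ENNReal.div_pos hε (by simp)).ne'
  obtain ⟨s, ⟨hs, hs1⟩, hsε⟩ : ∃ s : ℝ, s ∈ Ioo 0 1 ∧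
      ENNReal.ofReal (1 - s ^ Module.finrank ℝ E) < ε / 3 := by
    have hlim : Tendsto (fun s : ℝ => ENNReal.ofReal (1 - s ^ Module.finrank ℝ E)) (𝓝[<] 1)
        (𝓝 0) := by
      have : Continuous fun s : ℝ => ENNReal.ofReal (1 - s ^ Module.finrank ℝ E) :=
        ENNReal.continuous_ofReal.comp (by fun_prop)
      simpa using (this.tendsto 1).mono_left nhdsWithin_le_nhds
    exact ((show ∀ᶠ s : ℝ in 𝓝[<] 1, s ∈ Ioo 0 1 from Ioo_mem_nhdsLT zero_lt_one).and
      (hlim.eventually_lt_const (pos_iff_ne_zero.2 hε3))).exists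
  have hring (x : E) (r : ℝ) :
      μ (closedBall x r \ ball x (s * r)) ≤ ε / 3 * μ (closedBall x r) := by
    rcases le_or_gt r 0 with hr | hr
    · have : closedBall x r ⊆ {x} := by
        intro y hy
        exact dist_le_zero.1 ((mem_closedBall.1 hy).trans hr)
      exact (measure_mono (sdiff_subset.trans this)).trans (by simp)
    · rw [measure_sdiff ((ball_subset_ball (by nlinarith)).trans ball_subset_closedBall)
        measurableSet_ball.nullMeasurableSet measure_ball_lt_top.ne,
        Measure.addHaar_ball_mul_of_pos μ x hs, ← Measure.addHaar_ball_center μ x r,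
        ← Measure.addHaar_closedBall_eq_addHaar_ball μ x r]
      calc _ = (1 - ENNReal.ofReal (s ^ Module.finrank ℝ E)) * μ (closedBall x r) := by
            rw [ENNReal.sub_mul fun _ _ => measure_closedBall_lt_top.ne, one_mul]
        _ ≤ ε / 3 * μ (closedBall x r) := by
            gcongr
            rw [← ENNReal.ofReal_one, ← ENNReal.ofReal_sub _ (by positivity)]
            exact hsε.le
  obtain ⟨C, hC, hcut⟩ := exists_cutoff_linear (E := E) hs hs1
  refine ⟨C, hC, fun Ω hΩ hfin hpos w M η hw hwM hη => ?_⟩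
  have hM : 0 ≤ M := (norm_nonneg _).trans (hwM 0)
  obtain ⟨t, r, htr, hdisj, hcov⟩ := exists_finset_closedBall_almost_constant μ hΩ hfin hpos hw
    hε3 hη (show 0 < η / (M + 1) by positivity)
  have hcut' : ∀ x ∈ t, ∃ f : E → ℝ, ContDiff ℝ 1 f ∧ tsupport f ⊆ closedBall x (r x) ∧
      (∀ y, |f y| ≤ ‖w x‖ * r x) ∧ (∀ y, ‖fderiv ℝ f y‖ ≤ C * ‖w x‖) ∧
        ∀ y ∈ ball x (s * r x), fderiv ℝ f y = w x :=
    fun x hx => hcut x (r x) (w x) (htr x hx).1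
  choose! f hf1 hfs hfb hfd hfe using hcut'
  have hsum {x : E} (hx : x ∈ t) {y : E} (hy : y ∈ closedBall x (r x)) :=
    sum_eq_of_mem_of_tsupport_subset (fun x hx => (hf1 x hx).differentiable one_ne_zero)
      hdisj hfs hx hy
  set φ : E → ℝ := fun y => ∑ x ∈ t, f x y
  set K : Set E := ⋃ x ∈ t, closedBall x (r x) with hK
  have hKc : IsCompact K := t.isCompact_biUnion fun x _ => isCompact_closedBall x (r x)
  have hφK : tsupport φ ⊆ K := by
    refine closure_minimal (fun y hy => ?_) hKc.isClosed
    obtain ⟨x, hx, hxy⟩ := Finset.exists_ne_zero_of_sum_ne_zero hy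
    exact mem_iUnion₂.2 ⟨x, hx, hfs x hx (subset_tsupport _ hxy)⟩
  refine ⟨φ, ⋃ x ∈ t, ball x (s * r x) ∩ {y | dist (w y) (w x) ≤ η},
    ContDiff.sum fun x hx => hf1 x hx, hKc.of_isClosed_subset (isClosed_tsupport _) hφK,
    hφK.trans (iUnion₂_subset fun x hx => (htr x hx).2.2.1), fun y => ?_, fun y => ?_,
    t.measurableSet_biUnion fun x _ => measurableSet_ball.inter
      (measurableSet_le (hw.dist measurable_const) measurable_const), ?_, ?_⟩
  · by_cases hy : y ∈ K
    · obtain ⟨x, hx, hxy⟩ := mem_iUnion₂.1 hy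
      rw [show φ y = f x y from (hsum hx hxy).1]
      calc |f x y| ≤ ‖w x‖ * r x := hfb x hx y
        _ ≤ (M + 1) * (η / (M + 1)) := by
            gcongr
            · exact (htr x hx).1.le
            · linarith [hwM x]
            · exact (htr x hx).2.1.le
        _ = η := by field_simp
    · rw [image_eq_zero_of_notMem_tsupport fun h => hy (hφK h), abs_zero]
      exact hη.le
  · by_cases hy : y ∈ K
    · obtain ⟨x, hx, hxy⟩ := mem_iUnion₂.1 hy
      rw [(hsum hx hxy).2]
      exact (hfd x hx y).trans (by gcongr; exact hwM x)
    · rw [fderiv_of_notMem_tsupport ℝ fun h => hy (hφK h), norm_zero]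
      positivity
  · calc _ ≤ μ ((Ω \ K) ∪ ⋃ x ∈ t, ((closedBall x (r x) \ ball x (s * r x)) ∪
          (closedBall x (r x) \ {y | dist (w y) (w x) ≤ η}))) := by
          refine measure_mono ?_
          rintro y ⟨hyΩ, hyG⟩
          by_cases hy : y ∈ K
          · obtain ⟨x, hx, hxy⟩ := mem_iUnion₂.1 hy
            refine Or.inr (mem_iUnion₂.2 ⟨x, hx, ?_⟩)
            by_contra hcon
            rw [mem_union, not_or] at hcon
            exact hyG (mem_iUnion₂.2 ⟨x, hx, not_not.1 fun h => hcon.1 ⟨hxy, h⟩,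
              not_not.1 fun h => hcon.2 ⟨hxy, h⟩⟩)
          · exact Or.inl ⟨hyΩ, hy⟩
      _ ≤ ε / 3 * μ Ω + ∑ x ∈ t, (ε / 3 * μ (closedBall x (r x)) +
            ε / 3 * μ (closedBall x (r x))) := by
          refine (measure_union_le _ _).trans (add_le_add hcov ?_)
          refine (measure_biUnion_finset_le _ _).trans (Finset.sum_le_sum fun x hx => ?_)
          exact (measure_union_le _ _).trans (add_le_add (hring x _) (htr x hx).2.2.2)
      _ = ε / 3 * μ Ω + (ε / 3 + ε / 3) * μ K := by
          rw [hK, measure_biUnion_finset hdisj fun _ _ => measurableSet_closedBall,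
            Finset.mul_sum]
          simp only [add_mul]
      _ ≤ ε / 3 * μ Ω + (ε / 3 + ε / 3) * μ Ω := by
          gcongr
          exact iUnion₂_subset fun x hx => (htr x hx).2.2.1
      _ = ε * μ Ω := by rw [← add_mul, ← add_assoc, ENNReal.add_thirds]
  · intro y hy
    obtain ⟨x, hx, hyb, hyw⟩ := mem_iUnion₂.1 hy
    have hr := (htr x hx).1
    rw [(hsum hx (ball_subset_closedBall (ball_subset_ball (by nlinarith) hyb))).2,
      hfe x hx y hyb, ← dist_eq_norm]
    exact hyw

/-- Lusin-type theorem for derivatives: a measurable field of linear forms coincides, off a set of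
small measure, with the derivative of a `C¹` function vanishing at the boundary. -/
theorem exists_contDiff_fderiv_eq {Ω : Set E} (hΩ : IsOpen Ω) (hfin : μ Ω ≠ ∞) (hpos : μ Ω ≠ 0)
    {v : E → E →L[ℝ] ℝ} (hv : Measurable v) {ε : ℝ≥0∞} (hε : ε ≠ 0) :
    ∃ (F : Set E) (φ : E → ℝ), IsClosed F ∧ ContDiff ℝ 1 φ ∧
      (∀ x ∉ Ω, φ x = 0 ∧ fderiv ℝ φ x = 0) ∧
      Tendsto (fun x => |φ x| + ‖fderiv ℝ φ x‖) (cocompact E) (𝓝 0) ∧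
      μ (Ω \ F) ≤ ε * μ Ω ∧ ∀ x ∈ F, v x = fderiv ℝ φ x := by
  have hε3 : ε / 3 ≠ 0 := (ENNReal.div_pos hε (by simp)).ne'
  obtain ⟨e, he0, hesum⟩ := ENNReal.exists_pos_sum_of_countable hε3 ℕ
  obtain ⟨m, hm⟩ := exists_nat_measure_norm_gt_le hΩ.measurableSet hfin hv (mul_ne_zero hε3 hpos)
  choose C hC hstep using fun k =>
    exists_contDiff_fderiv_approx μ (ENNReal.coe_ne_zero.2 (he0 k).ne')
  let η : ℕ → ℝ := fun k => (1 / 2) ^ k / (1 + C (k + 1))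
  have hη (k : ℕ) : 0 < η k := by have := hC (k + 1); positivity
  have hηle (k : ℕ) : η k ≤ (1 / 2) ^ k :=
    div_le_self (by positivity) (by linarith [hC (k + 1)])
  let M : ℕ → ℝ := fun k => k.casesOn (m : ℝ) η
  have hstep' : ∀ (k : ℕ) (w : E → E →L[ℝ] ℝ), ∃ (φ : E → ℝ) (G : Set E),
      (Measurable w ∧ ∀ x, ‖w x‖ ≤ M k) → ContDiff ℝ 1 φ ∧ HasCompactSupport φ ∧
        tsupport φ ⊆ Ω ∧ (∀ y, |φ y| ≤ η k) ∧ (∀ y, ‖fderiv ℝ φ y‖ ≤ C k * M k) ∧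
        MeasurableSet G ∧ μ (Ω \ G) ≤ e k * μ Ω ∧ ∀ x ∈ G, ‖w x - fderiv ℝ φ x‖ ≤ η k := by
    intro k w
    rcases Classical.em (Measurable w ∧ ∀ x, ‖w x‖ ≤ M k) with h | h
    · obtain ⟨φ, G, hφ⟩ := hstep k Ω hΩ hfin hpos w (M k) (η k) h.1 h.2 (hη k)
      exact ⟨φ, G, fun _ => hφ⟩
    · exact ⟨0, ∅, fun h' => absurd h' h⟩
  choose Φ Γ hΦ using hstep'
  let W : ℕ → E → E →L[ℝ] ℝ := fun k => k.rec ({x | ‖v x‖ ≤ m}.indicator v)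
    fun k w => (Γ k w).indicator fun x => w x - fderiv ℝ (Φ k w) x
  have hW (k : ℕ) : Measurable (W k) ∧ ∀ x, ‖W k x‖ ≤ M k := by
    induction k with
    | zero =>
      refine ⟨hv.indicator (measurableSet_le hv.norm measurable_const), fun x => ?_⟩
      by_cases hx : x ∈ {x | ‖v x‖ ≤ m}
      · simpa [W, M, indicator_of_mem hx] using hx
      · simp [W, M, indicator_of_notMem hx]
    | succ k ih =>
      obtain ⟨h1, -, -, -, -, h6, -, h8⟩ := hΦ k (W k) ih
      refine ⟨(ih.1.sub (h1.continuous_fderiv one_ne_zero).measurable).indicator h6, fun x => ?_⟩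
      change ‖(Γ k (W k)).indicator (fun x => W k x - fderiv ℝ (Φ k (W k)) x) x‖ ≤ η k
      by_cases hx : x ∈ Γ k (W k)
      · rw [indicator_of_mem hx]
        exact h8 x hx
      · rw [indicator_of_notMem hx, norm_zero]
        exact (hη k).le
  let f : ℕ → E → ℝ := fun k => Φ k (W k)
  let G : ℕ → Set E := fun k => Γ k (W k)
  have hf (k : ℕ) := hΦ k (W k) (hW k)
  have hdiff (k : ℕ) : Differentiable ℝ (f k) := (hf k).1.differentiable one_ne_zero
  have hgeom : Summable fun k : ℕ => (1 / 2 : ℝ) ^ k := summable_geometric_two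
  have hηsum : Summable η := hgeom.of_nonneg_of_le (fun k => (hη k).le) hηle
  have hCM : Summable fun k => C k * M k := by
    refine (summable_nat_add_iff 1).1 (hgeom.of_nonneg_of_le (fun k => ?_) fun k => ?_)
    · exact mul_nonneg (hC _) (hη k).le
    · change C (k + 1) * ((1 / 2) ^ k / (1 + C (k + 1))) ≤ _
      have := hC (k + 1)
      rw [← mul_div_assoc, div_le_iff₀ (by positivity)]
      nlinarith [pow_pos (one_half_pos (α := ℝ)) k]
  have hfb (k : ℕ) (x : E) : ‖f k x‖ ≤ η k := (hf k).2.2.2.1 x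
  have hdb (k : ℕ) (x : E) : ‖fderiv ℝ (f k) x‖ ≤ C k * M k := (hf k).2.2.2.2.1 x
  have hfd : fderiv ℝ (fun x => ∑' k, f k x) = fun x => ∑' k, fderiv ℝ (f k) x :=
    fderiv_tsum hCM hdiff hdb (x₀ := 0) (hηsum.of_norm_bounded fun k => hfb k 0)
  have hdsum (x : E) : Summable fun k => fderiv ℝ (f k) x := hCM.of_norm_bounded fun k => hdb k x
  have hfar (k : ℕ) : ∀ᶠ x in cocompact E, x ∉ tsupport (f k) :=
    (hf k).2.1.compl_mem_cocompact
  let S : Set E := {x | ‖v x‖ ≤ m} ∩ ⋂ k, G k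
  have hS : MeasurableSet S := (measurableSet_le hv.norm measurable_const).inter
    (MeasurableSet.iInter fun k => (hf k).2.2.2.2.2.1)
  obtain ⟨F, hFS, hF, hFμ⟩ := (hS.inter hΩ.measurableSet).exists_isClosed_sdiff_lt (μ := μ)
    ((measure_mono inter_subset_right).trans_lt hfin.lt_top).ne (mul_ne_zero hε3 hpos)
  refine ⟨F, fun x => ∑' k, f k x, hF, ?_, fun x hx => ?_, ?_, ?_, fun x hx => ?_⟩
  · refine contDiff_one_iff_fderiv.2 ⟨?_, ?_⟩
    · exact differentiable_tsum hCM (fun k x => (hdiff k x).hasFDerivAt) hdb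
    · rw [hfd]
      exact continuous_tsum (fun k => (hf k).1.continuous_fderiv one_ne_zero) hCM hdb
  · have hx' (k : ℕ) : x ∉ tsupport (f k) := fun h => hx ((hf k).2.2.1 h)
    rw [hfd]
    simp [fun k => image_eq_zero_of_notMem_tsupport (hx' k),
      fun k => fderiv_of_notMem_tsupport ℝ (hx' k)]
  · have h1 : Tendsto (fun x => ∑' k, f k x) (cocompact E) (𝓝 (∑' _ : ℕ, (0 : ℝ))) :=
      tendsto_tsum_of_dominated_convergence hηsum
        (fun k => tendsto_nhds_of_eventually_eq
          ((hfar k).mono fun x hx => image_eq_zero_of_notMem_tsupport hx))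
        (Eventually.of_forall fun x k => hfb k x)
    have h2 : Tendsto (fun x => ∑' k, fderiv ℝ (f k) x) (cocompact E)
        (𝓝 (∑' _ : ℕ, (0 : E →L[ℝ] ℝ))) :=
      tendsto_tsum_of_dominated_convergence hCM
        (fun k => tendsto_nhds_of_eventually_eq
          ((hfar k).mono fun x hx => fderiv_of_notMem_tsupport ℝ hx))
        (Eventually.of_forall fun x k => hdb k x)
    rw [hfd]
    simpa using h1.abs.add h2.norm
  · calc μ (Ω \ F) ≤ μ ((Ω ∩ {x | (m : ℝ) < ‖v x‖}) ∪ (⋃ k, Ω \ G k) ∪ ((S ∩ Ω) \ F)) := by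
          refine measure_mono ?_
          rintro x ⟨hxΩ, hxF⟩
          by_cases hxm : ‖v x‖ ≤ m
          · by_cases hxG : ∀ k, x ∈ G k
            · exact Or.inr ⟨⟨⟨hxm, mem_iInter.2 hxG⟩, hxΩ⟩, hxF⟩
            · obtain ⟨k, hk⟩ := not_forall.1 hxG
              exact Or.inl (Or.inr (mem_iUnion.2 ⟨k, hxΩ, hk⟩))
          · exact Or.inl (Or.inl ⟨hxΩ, not_le.1 hxm⟩)
      _ ≤ ε / 3 * μ Ω + ε / 3 * μ Ω + ε / 3 * μ Ω := by
          refine (measure_union_le _ _).trans (add_le_add ((measure_union_le _ _).trans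
            (add_le_add hm ?_)) hFμ.le)
          calc μ (⋃ k, Ω \ G k) ≤ ∑' k, (e k : ℝ≥0∞) * μ Ω :=
                (measure_iUnion_le _).trans
                  (ENNReal.tsum_le_tsum fun k => (hf k).2.2.2.2.2.2.1)
            _ = (∑' k, (e k : ℝ≥0∞)) * μ Ω := ENNReal.tsum_mul_right
            _ ≤ ε / 3 * μ Ω := by gcongr
      _ = ε * μ Ω := by rw [← add_mul, ← add_mul, ENNReal.add_thirds]
  · obtain ⟨⟨hxm, hxG⟩, -⟩ := hFS hx
    have hpart (k : ℕ) : ∑ j ∈ Finset.range k, fderiv ℝ (f j) x = v x - W k x := by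
      induction k with
      | zero => simp [W, indicator_of_mem hxm]
      | succ k ih =>
        have : W (k + 1) x = W k x - fderiv ℝ (f k) x := indicator_of_mem (mem_iInter.1 hxG k) _
        rw [Finset.sum_range_succ, ih, this]
        abel
    have hW0 : Tendsto (fun k => W k x) atTop (𝓝 0) := by
      refine (tendsto_add_atTop_iff_nat 1).1 ?_
      exact squeeze_zero_norm (fun k => (hW (k + 1)).2 x) hηsum.tendsto_atTop_zero
    rw [hfd]
    refine tendsto_nhds_unique ?_ (hdsum x).hasSum.tendsto_sum_nat
    simp only [hpart]
    simpa using hW0.const_sub (v x)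

end LusinGradient

/-- **Alberti's Lusin-type theorem for gradients.** For any open `Ω ⊆ ℝ^N` (`N ≥ 2`) of
finite measure, any Borel vector field `v` and any `ε > 0`, there are an open `A ⊆ Ω`
and `φ ∈ C¹₀(Ω)` with `ℋ^N(A) ≤ ε ℋ^N(Ω)` and `v = ∇φ` on `Ω ∖ A`. -/
theorem alberti_lusin_gradient (N : ℕ) (hN : 2 ≤ N) (Ω : Set (Euc N)) (hΩ : IsOpen Ω)
    (hfin : μH[N] Ω ≠ ⊤) (v : Euc N → Euc N) (hv : Measurable v)
    (ε : ℝ) (hε : 0 < ε) :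
    ∃ (A : Set (Euc N)) (φ : Euc N → ℝ), IsOpen A ∧ A ⊆ Ω ∧ MemC1Zero Ω φ ∧
      μH[N] A ≤ ENNReal.ofReal ε * μH[N] Ω ∧
      ∀ x ∈ Ω \ A, v x = gradient φ x := by
  have : Nontrivial (Euc N) :=
    Module.nontrivial_of_finrank_pos (R := ℝ) (by rw [finrank_euclideanSpace_fin]; omega)
  by_cases hpos : μH[N] Ω = 0
  · have hempty : Ω = ∅ := (hΩ.measure_eq_zero_iff _).1 hpos
    refine ⟨∅, 0, isOpen_empty, Set.empty_subset _, ⟨contDiff_const, fun x _ => ?_, ?_⟩, ?_, ?_⟩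
    · simp
    · simp
    · simp
    · simp [hempty]
  · let T := InnerProductSpace.toDual ℝ (Euc N)
    obtain ⟨F, φ, hF, hφ, hφ0, hφlim, hFμ, hFv⟩ := exists_contDiff_fderiv_eq μH[N] hΩ hfin hpos
      (v := fun x => T (v x)) (T.continuous.measurable.comp hv)
      (ENNReal.ofReal_pos.2 hε).ne'
    refine ⟨Ω \ F, φ, hΩ.sdiff hF, Set.sdiff_subset, ⟨hφ, hφ0, hφlim⟩, hFμ, fun x hx => ?_⟩
    have hxF : x ∈ F := by
      by_contra h
      exact hx.2 ⟨hx.1, h⟩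
    rw [gradient, ← hFv x hxF]
    exact (T.symm_apply_apply _).symm
end
end

section
/- Let N ≥ 2 and let Ω ⊂ ℝ^N be an open set with finite N-dimensional Lebesgue measure. Let v : Ω → ℝ^N be a Borel measurable vector field, and let η, ε, ϑ be arbitrary positive real numbers. Then there exist a compact set K contained in Ω and a function φ ∈ C¹₀(Ω) such that ℋ^N(Ω ∖ K) ≤ ε·ℋ^N(Ω), sup_{x ∈ Ω} |φ(x)| ≤ ϑ, and |v(x) − ∇φ(x)| ≤ η for every x ∈ K. -/
open MeasureTheory Filter

noncomputable section

/-- A measurable map on a finite measure space is uniformly close to a continuous one off a set of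
small measure. -/
theorem exists_continuous_measure_dist_le {X E : Type*} [TopologicalSpace X] [NormalSpace X]
    [MeasurableSpace X] [BorelSpace X] [NormedAddCommGroup E] [NormedSpace ℝ E]
    [SecondCountableTopology E] [MeasurableSpace E] [BorelSpace E]
    (ν : Measure X) [IsFiniteMeasure ν] [ν.WeaklyRegular] {v : X → E} (hv : Measurable v)
    {η : ℝ} (hη : 0 < η) {δ : ENNReal} (hδ : δ ≠ 0) :
    ∃ V : X → E, Continuous V ∧ ν {x | η < ‖v x - V x‖} ≤ δ := by
  have hmeas (n : ℕ) : MeasurableSet {x | (n : ℝ) < ‖v x‖} :=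
    measurableSet_lt measurable_const hv.norm
  obtain ⟨n, hn⟩ : ∃ n : ℕ, ν {x | (n : ℝ) < ‖v x‖} < δ / 2 := by
    have hlim := tendsto_measure_iInter_atTop (μ := ν) (s := fun n : ℕ => {x | (n : ℝ) < ‖v x‖})
      (fun n => (hmeas n).nullMeasurableSet)
      (fun m n hmn x (hx : (n : ℝ) < ‖v x‖) => lt_of_le_of_lt (by exact_mod_cast hmn) hx)
      ⟨0, measure_ne_top _ _⟩
    have hempty : (⋂ n : ℕ, {x | (n : ℝ) < ‖v x‖}) = ∅ := by
      refine Set.eq_empty_of_forall_notMem fun x hx => ?_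
      obtain ⟨n, hn⟩ := exists_nat_ge ‖v x‖
      exact (Set.mem_iInter.1 hx n).not_ge hn
    rw [hempty, measure_empty] at hlim
    exact ((tendsto_order.1 hlim).2 _ (ENNReal.half_pos hδ)).exists
  set w : X → E := {x | (n : ℝ) < ‖v x‖}ᶜ.indicator v
  have hw : MemLp w 1 ν := by
    refine MemLp.of_bound (hv.indicator (hmeas n).compl).aestronglyMeasurable n
      (Eventually.of_forall fun x => ?_)
    by_cases hx : (n : ℝ) < ‖v x‖
    · simp [w, hx]
    · simpa [w, hx] using not_lt.1 hx
  have hη' : ENNReal.ofReal η ≠ 0 := by simpa using hη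
  obtain ⟨g, hg, hgm⟩ := hw.exists_boundedContinuous_eLpNorm_sub_le ENNReal.one_ne_top
    (mul_ne_zero hη' (ENNReal.half_pos hδ).ne')
  refine ⟨g, g.continuous, ?_⟩
  have hcheb : ν {x | ENNReal.ofReal η ≤ ‖(w - g) x‖ₑ} ≤ δ / 2 := by
    have h := (mul_meas_ge_le_pow_eLpNorm' ν one_ne_zero ENNReal.one_ne_top
      (hw.sub hgm).aestronglyMeasurable (ENNReal.ofReal η)).trans
      (ENNReal.rpow_le_rpow hg (by simp))
    simp only [ENNReal.toReal_one, ENNReal.rpow_one] at h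
    exact (ENNReal.mul_le_mul_iff_right hη' ENNReal.ofReal_ne_top).1 h
  calc ν {x | η < ‖v x - g x‖}
      ≤ ν ({x | (n : ℝ) < ‖v x‖} ∪ {x | ENNReal.ofReal η ≤ ‖(w - g) x‖ₑ}) := by
        refine measure_mono fun x (hx : η < ‖v x - g x‖) => ?_
        by_cases hnx : (n : ℝ) < ‖v x‖
        · exact Or.inl hnx
        · right
          rw [Set.mem_ofPred_eq, ← ofReal_norm]
          refine ENNReal.ofReal_le_ofReal ?_
          simpa [w, hnx] using hx.le
    _ ≤ δ / 2 + δ / 2 := (measure_union_le _ _).trans (add_le_add hn.le hcheb)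
    _ = δ := ENNReal.add_halves δ

section

variable {E : Type*} [NormedAddCommGroup E] [InnerProductSpace ℝ E] [FiniteDimensional ℝ E]

/-- A cut-off linear function: supported in a ball, with prescribed gradient `c` on a closed subset
of the ball. -/
theorem exists_contDiff_gradient_eq_of_subset_ball {D : Set E} (hD : IsClosed D) {x : E} {r : ℝ}
    (hDr : D ⊆ Metric.ball x r) (c : E) :
    ∃ f : E → ℝ, ContDiff ℝ 1 f ∧ tsupport f ⊆ Metric.ball x r ∧
      (∀ y ∈ Metric.ball x r, |f y| ≤ ‖c‖ * r) ∧ ∀ y ∈ D, HasGradientAt f c y := by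
  obtain ⟨χ, h0, h1, hχ⟩ := exists_contMDiffMap_zero_one_nhds_of_isClosed (n := 1)
    (modelWithCornersSelf ℝ E) (Metric.isOpen_ball (x := x) (ε := r)).isClosed_compl hD
    (Set.disjoint_compl_left_iff_subset.2 hDr)
  refine ⟨fun y => χ y * inner ℝ c (y - x), ?_, ?_, fun y hy => ?_, fun y hy => ?_⟩
  · exact χ.contMDiff.contDiff.mul (contDiff_const.inner ℝ (contDiff_id.sub contDiff_const))
  · refine (closure_mono fun y (hy : χ y * inner ℝ c (y - x) ≠ 0) =>
      (left_ne_zero_of_mul hy : y ∈ Function.support χ)).trans fun y hy => ?_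
    by_contra hyr
    rw [eventually_nhdsSet_iff_forall] at h0
    exact notMem_tsupport_iff_eventuallyEq.2 (h0 y hyr) hy
  · rw [abs_mul, abs_of_nonneg (hχ y).1]
    have hyr : ‖y - x‖ ≤ r := (mem_ball_iff_norm.1 hy).le
    calc χ y * |inner ℝ c (y - x)| ≤ 1 * (‖c‖ * ‖y - x‖) := by
          gcongr
          exacts [(hχ y).2, abs_real_inner_le_norm _ _]
      _ ≤ ‖c‖ * r := by rw [one_mul]; gcongr
  · rw [eventually_nhdsSet_iff_forall] at h1
    have hlin : HasGradientAt (fun z => inner ℝ c (z - x)) c y := by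
      rw [hasGradientAt_iff_hasFDerivAt]
      simpa [inner_sub_right] using
        ((InnerProductSpace.toDual ℝ E c).hasFDerivAt (x := y)).sub_const (inner ℝ c x)
    refine hlin.congr_of_eventuallyEq ?_
    filter_upwards [h1 y hy] with z hz
    rw [hz, one_mul]

/-- Glueing cut-off linear functions over finitely many disjoint balls. -/
theorem exists_contDiff_gradient_eq_of_disjoint_balls {C : Set E} (hC : IsClosed C) (F : Finset E)
    (r : E → ℝ) (hdisj : (F : Set E).PairwiseDisjoint fun x => Metric.closedBall x (r x))
    (hCF : C ⊆ ⋃ x ∈ F, Metric.ball x (r x)) (V : E → E) {ϑ : ℝ} (hϑ : 0 ≤ ϑ)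
    (hr : ∀ x ∈ F, ‖V x‖ * r x ≤ ϑ) :
    ∃ φ : E → ℝ, ContDiff ℝ 1 φ ∧ tsupport φ ⊆ ⋃ x ∈ F, Metric.closedBall x (r x) ∧
      (∀ y, |φ y| ≤ ϑ) ∧
      ∀ x ∈ F, ∀ y ∈ C ∩ Metric.ball x (r x), HasGradientAt φ (V x) y := by
  have hball : ∀ x ∈ F, C ∩ Metric.closedBall x (r x) ⊆ Metric.ball x (r x) := by
    rintro x hx y ⟨hyC, hyx⟩
    obtain ⟨z, hz, hyz⟩ := Set.mem_iUnion₂.1 (hCF hyC)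
    rwa [hdisj.elim_set hx hz y hyx (Metric.ball_subset_closedBall hyz)]
  have hex : ∀ x : E, ∃ f : E → ℝ, x ∈ F → ContDiff ℝ 1 f ∧ tsupport f ⊆ Metric.ball x (r x) ∧
      (∀ y ∈ Metric.ball x (r x), |f y| ≤ ‖V x‖ * r x) ∧
      ∀ y ∈ C ∩ Metric.closedBall x (r x), HasGradientAt f (V x) y := fun x => by
    by_cases hx : x ∈ F
    · obtain ⟨f, hf⟩ := exists_contDiff_gradient_eq_of_subset_ball
        (hC.inter Metric.isClosed_closedBall) (hball x hx) (V x)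
      exact ⟨f, fun _ => hf⟩
    · exact ⟨0, fun h => absurd h hx⟩
  choose f hf using hex
  have hzero : ∀ x ∈ F, ∀ y ∉ Metric.ball x (r x), f x y = 0 := fun x hx y hy =>
    image_eq_zero_of_notMem_tsupport fun h => hy ((hf x hx).2.1 h)
  have heq : ∀ x ∈ F, ∀ y ∈ Metric.ball x (r x), ∑ z ∈ F, f z y = f x y := fun x hx y hy =>
    Finset.sum_eq_single_of_mem x hx fun z hz hzx => hzero z hz y fun hyz =>
      hzx (hdisj.elim_set hz hx y (Metric.ball_subset_closedBall hyz)
        (Metric.ball_subset_closedBall hy))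
  refine ⟨fun y => ∑ x ∈ F, f x y, ContDiff.sum fun x hx => (hf x hx).1, ?_, fun y => ?_, ?_⟩
  · refine closure_minimal (fun y hy => ?_)
      (F.finite_toSet.isClosed_biUnion fun x _ => Metric.isClosed_closedBall)
    obtain ⟨x, hx, hxy⟩ := Finset.exists_ne_zero_of_sum_ne_zero hy
    refine Set.mem_biUnion hx (Metric.ball_subset_closedBall ?_)
    by_contra h
    exact hxy (hzero x hx y h)
  · by_cases hy : ∃ x ∈ F, y ∈ Metric.ball x (r x)
    · obtain ⟨x, hx, hyx⟩ := hy
      simpa only [heq x hx y hyx] using ((hf x hx).2.2.1 y hyx).trans (hr x hx)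
    · push Not at hy
      simpa [Finset.sum_eq_zero fun x hx => hzero x hx y (hy x hx)] using hϑ
  · rintro x hx y ⟨hyC, hyx⟩
    refine ((hf x hx).2.2.2 y ⟨hyC, Metric.ball_subset_closedBall hyx⟩).congr_of_eventuallyEq ?_
    filter_upwards [Metric.isOpen_ball.mem_nhds hyx] with z hz using heq x hx z hz

/-- Almost all of a set is covered by disjoint open balls centred in it, with radii below a
prescribed pointwise bound. -/
theorem exists_disjoint_ball_covering_ae [MeasurableSpace E] [BorelSpace E] [Nontrivial E]
    (μ : Measure E) [μ.IsAddHaarMeasure] (s : Set E) (R : E → ℝ) (hR : ∀ x ∈ s, 0 < R x) :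
    ∃ (t : Set E) (r : E → ℝ), t ⊆ s ∧ (∀ x ∈ t, 0 < r x ∧ r x < R x) ∧
      μ (s \ ⋃ x ∈ t, Metric.ball x (r x)) = 0 ∧
      t.PairwiseDisjoint fun x => Metric.closedBall x (r x) := by
  obtain ⟨t, r, ht, hts, hr, hμ, hdisj⟩ := Besicovitch.exists_disjoint_closedBall_covering_ae μ
    (fun _ => Set.univ) s (fun x _ δ hδ => by simpa using hδ) R hR
  refine ⟨t, r, hts, fun x hx => (hr x hx).2, ?_, hdisj⟩
  refine measure_mono_null (t := (s \ ⋃ x ∈ t, Metric.closedBall x (r x)) ∪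
    ⋃ x ∈ t, Metric.sphere x (r x)) ?_ (measure_union_null hμ
      ((measure_biUnion_null_iff ht).2 fun x _ => Measure.addHaar_sphere μ x (r x)))
  rintro y ⟨hys, hy⟩
  by_cases h : y ∈ ⋃ x ∈ t, Metric.closedBall x (r x)
  · right
    obtain ⟨x, hx, hyx⟩ := Set.mem_iUnion₂.1 h
    refine Set.mem_biUnion hx (le_antisymm hyx (not_lt.1 fun hlt => hy ?_))
    exact Set.mem_biUnion hx hlt
  · exact Or.inl ⟨hys, h⟩

/-- Rough approximation by gradients, for an arbitrary Haar measure. -/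
theorem exists_contDiff_gradient_approx [MeasurableSpace E] [BorelSpace E] [Nontrivial E]
    (μ : Measure E) [μ.IsAddHaarMeasure] {Ω : Set E} (hΩ : IsOpen Ω) (hfin : μ Ω ≠ ⊤)
    {v : E → E} (hv : Measurable v) {η ϑ : ℝ} (hη : 0 < η) (hϑ : 0 < ϑ)
    {δ : ENNReal} (hδ : δ ≠ 0) :
    ∃ (K : Set E) (φ : E → ℝ), IsCompact K ∧ K ⊆ Ω ∧ ContDiff ℝ 1 φ ∧ HasCompactSupport φ ∧
      tsupport φ ⊆ Ω ∧ μ (Ω \ K) ≤ δ ∧ (∀ x, |φ x| ≤ ϑ) ∧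
      ∀ x ∈ K, ‖v x - gradient φ x‖ ≤ η := by
  have : IsFiniteMeasure (μ.restrict Ω) := ⟨by simpa using hfin.lt_top⟩
  obtain ⟨V, hV, hVμ⟩ := exists_continuous_measure_dist_le (μ.restrict Ω) hv (half_pos hη)
    (ENNReal.half_pos hδ).ne'
  set B := {x | η / 2 < ‖v x - V x‖}
  have hB : MeasurableSet B :=
    measurableSet_lt measurable_const (hv.sub hV.measurable).norm
  have hex : ∀ x : E, ∃ R : ℝ, x ∈ Ω → 0 < R ∧ Metric.ball x R ⊆ Ω ∧ ‖V x‖ * R ≤ ϑ ∧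
      ∀ y ∈ Metric.ball x R, ‖V y - V x‖ ≤ η / 2 := fun x => by
    by_cases hx : x ∈ Ω
    · obtain ⟨R₁, hR₁, hR₁Ω⟩ := Metric.isOpen_iff.1 hΩ x hx
      obtain ⟨R₂, hR₂, hR₂V⟩ := Metric.continuous_iff.1 hV x (η / 2) (half_pos hη)
      have hpos : 0 < ‖V x‖ + 1 := by positivity
      refine ⟨min (min R₁ R₂) (ϑ / (‖V x‖ + 1)), fun _ => ⟨by positivity, ?_, ?_, ?_⟩⟩
      · exact (Metric.ball_subset_ball ((min_le_left _ _).trans (min_le_left _ _))).trans hR₁Ω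
      · calc ‖V x‖ * min (min R₁ R₂) (ϑ / (‖V x‖ + 1))
            ≤ (‖V x‖ + 1) * (ϑ / (‖V x‖ + 1)) := by
              gcongr
              · linarith
              · exact min_le_right _ _
          _ = ϑ := by field_simp
      · intro y hy
        rw [← dist_eq_norm]
        exact (hR₂V y (lt_of_lt_of_le hy ((min_le_left _ _).trans (min_le_right _ _)))).le
    · exact ⟨0, fun h => absurd h hx⟩
  choose R hR using hex
  obtain ⟨t, r, htΩ, hr, hμt, hdisj⟩ :=
    exists_disjoint_ball_covering_ae μ Ω R fun x hx => (hR x hx).1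
  set W := ⋃ x ∈ t, Metric.ball x (r x)
  have hW : IsOpen W := isOpen_biUnion fun x _ => Metric.isOpen_ball
  have hclosed : ∀ x ∈ t, Metric.closedBall x (r x) ⊆ Ω := fun x hx =>
    (Metric.closedBall_subset_ball (hr x hx).2).trans (hR x (htΩ hx)).2.1
  have hWΩ : W ⊆ Ω := Set.iUnion₂_subset fun x hx =>
    Metric.ball_subset_closedBall.trans (hclosed x hx)
  obtain ⟨K, hKsub, hK, hKμ⟩ := (hW.measurableSet.diff hB).exists_isCompact_sdiff_lt
    (ne_top_of_le_ne_top hfin (measure_mono (Set.sdiff_subset.trans hWΩ)))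
    (ENNReal.half_pos hδ).ne'
  obtain ⟨F, hFt, hF, hKF⟩ := hK.elim_finite_subcover_image
    (fun x _ => Metric.isOpen_ball) (hKsub.trans Set.sdiff_subset)
  lift F to Finset E using hF
  obtain ⟨φ, hφ, hsupp, hbound, hgrad⟩ := exists_contDiff_gradient_eq_of_disjoint_balls hK.isClosed
    F r (hdisj.subset hFt) hKF V hϑ.le fun x hx =>
      (mul_le_mul_of_nonneg_left (hr x (hFt hx)).2.le (norm_nonneg _)).trans
        (hR x (htΩ (hFt hx))).2.2.1
  refine ⟨K, φ, hK, (hKsub.trans Set.sdiff_subset).trans hWΩ, hφ, ?_, ?_, ?_, hbound, ?_⟩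
  · exact (F.finite_toSet.isCompact_biUnion fun x _ =>
      isCompact_closedBall x (r x)).of_isClosed_subset (isClosed_tsupport φ) hsupp
  · exact hsupp.trans (Set.iUnion₂_subset fun x hx => hclosed x (hFt hx))
  · rw [Measure.restrict_apply hB] at hVμ
    calc μ (Ω \ K) ≤ μ ((Ω \ W) ∪ (B ∩ Ω) ∪ ((W \ B) \ K)) := by
          refine measure_mono fun y hy => ?_
          by_cases h₁ : y ∈ W
          · by_cases h₂ : y ∈ B
            · exact Or.inl (Or.inr ⟨h₂, hy.1⟩)
            · exact Or.inr ⟨⟨h₁, h₂⟩, hy.2⟩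
          · exact Or.inl (Or.inl ⟨hy.1, h₁⟩)
      _ ≤ 0 + δ / 2 + δ / 2 := (measure_union_le _ _).trans
          (add_le_add ((measure_union_le _ _).trans (add_le_add hμt.le hVμ)) hKμ.le)
      _ = δ := by rw [zero_add, ENNReal.add_halves]
  · intro y hy
    obtain ⟨x, hx, hyx⟩ := Set.mem_iUnion₂.1 (hKF hy)
    rw [(hgrad x hx y ⟨hy, hyx⟩).gradient]
    have h₁ : ‖v y - V y‖ ≤ η / 2 := not_lt.1 (hKsub hy).2
    have h₂ : ‖V y - V x‖ ≤ η / 2 := (hR x (htΩ (hFt hx))).2.2.2 y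
      (Metric.ball_subset_ball (hr x (hFt hx)).2.le hyx)
    linarith [norm_sub_le_norm_sub_add_norm_sub (v y) (V y) (V x)]

end

theorem memC1Zero_of_tsupport_subset {N : ℕ} {Ω : Set (Euc N)} {φ : Euc N → ℝ}
    (hφ : ContDiff ℝ 1 φ) (hc : HasCompactSupport φ) (hΩ : tsupport φ ⊆ Ω) : MemC1Zero Ω φ := by
  have hzero : ∀ x ∉ tsupport φ, φ x = 0 ∧ fderiv ℝ φ x = 0 := fun x hx =>
    ⟨image_eq_zero_of_notMem_tsupport hx, fderiv_of_notMem_tsupport ℝ hx⟩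
  refine ⟨hφ, fun x hx => hzero x fun h => hx (hΩ h), tendsto_const_nhds.congr' ?_⟩
  filter_upwards [hc.isCompact.compl_mem_cocompact] with x hx
  simp [hzero x hx]

/-- **The key rough-approximation lemma.** For any open `Ω ⊆ ℝ^N` (`N ≥ 2`) with finite
measure, any Borel vector field `v : Ω → ℝ^N`, and any positive `η, ε, ϑ`, there exist a
compact `K ⊆ Ω` and `φ ∈ C¹₀(Ω)` with `ℋ^N(Ω ∖ K) ≤ ε ℋ^N(Ω)`, `sup_Ω |φ| ≤ ϑ`, and
`|v − ∇φ| ≤ η` on `K`. -/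
theorem rough_approximation (N : ℕ) (hN : 2 ≤ N) (Ω : Set (Euc N)) (hΩ : IsOpen Ω)
    (hfin : μH[N] Ω ≠ ⊤) (v : Euc N → Euc N) (hv : Measurable v)
    (η ε ϑ : ℝ) (hη : 0 < η) (hε : 0 < ε) (hϑ : 0 < ϑ) :
    ∃ (K : Set (Euc N)) (φ : Euc N → ℝ), IsCompact K ∧ K ⊆ Ω ∧ MemC1Zero Ω φ ∧
      μH[N] (Ω \ K) ≤ ENNReal.ofReal ε * μH[N] Ω ∧
      (∀ x ∈ Ω, |φ x| ≤ ϑ) ∧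
      ∀ x ∈ K, ‖v x - gradient φ x‖ ≤ η := by
  have : Nontrivial (Euc N) := Module.nontrivial_of_finrank_pos (R := ℝ) (by simp; lia)
  have hHaar : (μH[N] : Measure (Euc N)).IsAddHaarMeasure := by
    simpa using isAddHaarMeasure_hausdorffMeasure (E := Euc N)
  rcases Ω.eq_empty_or_nonempty with rfl | hne
  · exact ⟨∅, 0, isCompact_empty, subset_rfl,
      memC1Zero_of_tsupport_subset contDiff_const HasCompactSupport.zero (by simp), by simp⟩
  obtain ⟨K, φ, hK, hKΩ, hφ, hc, hsupp, hμ, hb, hg⟩ := exists_contDiff_gradient_approx μH[N] hΩ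
    hfin hv hη hϑ (δ := ENNReal.ofReal ε * μH[N] Ω)
    (mul_ne_zero (by simpa using hε) (hΩ.measure_pos _ hne).ne')
  exact ⟨K, φ, hK, hKΩ, memC1Zero_of_tsupport_subset hφ hc hsupp, hμ, fun x _ => hb x, hg⟩
end
end

section
/- Let N ≥ 2 and let Ω ⊂ ℝ^N be an open set with finite N-dimensional Lebesgue measure. Let v : Ω → ℝ^N be a continuous vector field with |v(x)| ≤ Λ for all x ∈ Ω, for some finite constant Λ. Then for all positive real numbers η, ε, ϑ there exist a compact set K ⊂ Ω and a function φ ∈ C¹₀(Ω) such that ℋ^N(Ω ∖ K) ≤ ε·ℋ^N(Ω), sup_{x ∈ Ω} |φ(x)| ≤ ϑ, and |v(x) − ∇φ(x)| ≤ η for every x ∈ K. -/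
open MeasureTheory Filter

noncomputable section

open Set Topology
open scoped Manifold ENNReal

/-- A smooth cutoff equal to `1` near a compact set, with compact support in a given
open neighbourhood of it. -/
theorem exists_contDiff_cutoff {E : Type*} [NormedAddCommGroup E] [NormedSpace ℝ E]
    [FiniteDimensional ℝ E] {L U : Set E} (hL : IsCompact L) (hU : IsOpen U) (hLU : L ⊆ U) :
    ∃ χ : E → ℝ, ContDiff ℝ 1 χ ∧ (∀ᶠ x in 𝓝ˢ L, χ x = 1) ∧ HasCompactSupport χ ∧
      tsupport χ ⊆ U ∧ ∀ x, |χ x| ≤ 1 := by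
  obtain ⟨T, hT, hLT, hTU⟩ := exists_compact_between hL hU hLU
  obtain ⟨f, hf1, hf0, hf⟩ :=
    exists_contMDiffMap_one_nhds_of_subset_interior (n := 1) 𝓘(ℝ, E) hL.isClosed hLT
  have hsupp : tsupport f ⊆ T :=
    closure_minimal (fun x hx => by_contra fun hxT => hx (hf0 x hxT)) hT.isClosed
  exact ⟨f, f.contMDiff.contDiff, hf1, HasCompactSupport.intro hT hf0, hsupp.trans hTU,
    fun x => abs_le.2 ⟨by linarith [(hf x).1], (hf x).2⟩⟩

/-- Functions prescribed near finitely many disjoint compact sets can be patched together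
by a `C¹` function which is pointwise dominated by the given ones. -/
theorem exists_contDiff_patching {E : Type*} [NormedAddCommGroup E] [NormedSpace ℝ E]
    [FiniteDimensional ℝ E] (s : Finset ℕ) {L A : ℕ → Set E} (hL : ∀ n, IsCompact (L n))
    (hd : Pairwise (Function.onFun Disjoint L)) (hA : ∀ n, IsOpen (A n)) (hLA : ∀ n, L n ⊆ A n)
    {g : ℕ → E → ℝ} (hg : ∀ n, ContDiff ℝ 1 (g n)) :
    ∃ φ : E → ℝ, ContDiff ℝ 1 φ ∧ HasCompactSupport φ ∧ tsupport φ ⊆ ⋃ n, A n ∧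
      (∀ x, φ x = 0 ∨ ∃ n, x ∈ A n ∧ |φ x| ≤ |g n x|) ∧
      ∀ n ∈ s, ∀ x ∈ L n, φ =ᶠ[𝓝 x] g n := by
  have hd' : (s : Set ℕ).PairwiseDisjoint fun n => 𝓝ˢ (L n) := fun i _ j _ hij =>
    separatedNhds_iff_disjoint.1 <|
      SeparatedNhds.of_isCompact_isCompact_isClosed (hL i) (hL j) (hL j).isClosed (hd hij)
  obtain ⟨U, hU, hUd⟩ := hd'.exists_mem_filter_basis s.finite_toSet fun n => hasBasis_nhdsSet (L n)
  choose χ hχ hχ1 hχc hχs hχb using fun n =>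
    exists_contDiff_cutoff (hL n) ((hA n).inter (hU n).1) (subset_inter (hLA n) (hU n).2)
  have hzero : ∀ n x, x ∉ A n ∩ U n → χ n x = 0 := fun n x hx =>
    image_eq_zero_of_notMem_tsupport fun h => hx (hχs n h)
  have hsum : ∀ n ∈ s, ∀ x ∈ U n, ∑ i ∈ s, χ i x * g i x = χ n x * g n x := by
    intro n hn x hx
    refine Finset.sum_eq_single_of_mem n hn fun i hi hin => ?_
    rw [hzero i x fun h => disjoint_left.1 (hUd hi hn hin) h.2 hx, zero_mul]
  have hT : IsCompact (⋃ n ∈ s, tsupport (χ n)) := s.isCompact_biUnion fun n _ => hχc n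
  have hout : ∀ x, x ∉ ⋃ n ∈ s, tsupport (χ n) → ∑ i ∈ s, χ i x * g i x = 0 := by
    intro x hx
    refine Finset.sum_eq_zero fun i hi => ?_
    rw [image_eq_zero_of_notMem_tsupport fun h => hx (mem_biUnion hi h), zero_mul]
  refine ⟨fun x => ∑ i ∈ s, χ i x * g i x, ContDiff.sum fun i _ => (hχ i).mul (hg i),
    HasCompactSupport.intro hT hout, ?_, fun x => ?_, fun n hn x hx => ?_⟩
  · refine (closure_minimal (fun x hx => ?_) hT.isClosed).trans ?_
    · exact by_contra fun h => hx (hout x h)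
    exact iUnion₂_subset fun n _ => ((hχs n).trans inter_subset_left).trans (subset_iUnion A n)
  · by_cases h : ∃ n ∈ s, x ∈ A n ∩ U n
    · obtain ⟨n, hn, hx⟩ := h
      refine Or.inr ⟨n, hx.1, ?_⟩
      simp only [hsum n hn x hx.2, abs_mul]
      exact mul_le_of_le_one_left (abs_nonneg _) (hχb n x)
    · push Not at h
      exact Or.inl <| Finset.sum_eq_zero fun i hi => by rw [hzero i x (h i hi), zero_mul]
  · filter_upwards [(hU n).1.mem_nhds ((hU n).2 hx), (hχ1 n).filter_mono (nhds_le_nhdsSet hx)]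
      with y hy hy1
    simp only [hsum n hn y hy, hy1, one_mul]

/-- Inner approximation of a countable measurable partition of a set of finite measure by
finitely many compact sets. -/
theorem exists_isCompact_subset_measure_diff_biUnion_le {X : Type*} [TopologicalSpace X]
    [T2Space X] [MeasurableSpace X] [BorelSpace X] {μ : Measure X} [μ.InnerRegularCompactLTTop]
    {C : ℕ → Set X} (hC : ∀ n, MeasurableSet (C n)) (hfin : μ (⋃ n, C n) ≠ ⊤)
    {δ : ℝ≥0∞} (hδ : δ ≠ 0) :
    ∃ (s : Finset ℕ) (L : ℕ → Set X), (∀ n, IsCompact (L n)) ∧ (∀ n, L n ⊆ C n) ∧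
      μ ((⋃ n, C n) \ ⋃ n ∈ s, L n) ≤ δ := by
  obtain ⟨δ', hδ', hsum⟩ := ENNReal.exists_pos_sum_of_countable hδ ℕ
  choose L hLC hL hLμ using fun n => (hC n).exists_isCompact_sdiff_lt (μ := μ)
    (ne_top_of_le_ne_top hfin (measure_mono (subset_iUnion C n)))
    (ENNReal.coe_ne_zero.2 (hδ' n).ne')
  have hlim : μ (⋂ m, (⋃ n, C n) \ ⋃ n ∈ Finset.range m, L n) < δ := by
    refine lt_of_le_of_lt ?_ hsum
    refine (measure_mono (t := ⋃ n, C n \ L n) fun x hx => ?_).trans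
      ((measure_iUnion_le _).trans (ENNReal.tsum_le_tsum fun n => (hLμ n).le))
    rw [mem_iInter] at hx
    obtain ⟨n, hn⟩ := mem_iUnion.1 (hx 0).1
    exact mem_iUnion.2 ⟨n, hn, fun h => (hx (n + 1)).2 (mem_biUnion (by simp) h)⟩
  have htend := tendsto_measure_iInter_atTop (μ := μ)
    (s := fun m => (⋃ n, C n) \ ⋃ n ∈ Finset.range m, L n)
    (fun m => ((MeasurableSet.iUnion hC).diff
      ((Finset.range m).measurableSet_biUnion fun n _ => (hL n).measurableSet)).nullMeasurableSet)
    (fun a b hab => sdiff_subset_sdiff_right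
      (biUnion_subset_biUnion_left (Finset.coe_subset.2 (Finset.range_mono hab))))
    ⟨0, ne_top_of_le_ne_top hfin (measure_mono sdiff_subset)⟩
  obtain ⟨m, hm⟩ := (htend.eventually_lt_const hlim).exists
  exact ⟨Finset.range m, L, hL, hLC, hm.le⟩

theorem hasGradientAt_inner_sub {F : Type*} [NormedAddCommGroup F] [InnerProductSpace ℝ F]
    [CompleteSpace F] (a b x : F) : HasGradientAt (fun y => inner ℝ a (y - b)) a x := by
  rw [hasGradientAt_iff_hasFDerivAt]
  exact ((InnerProductSpace.toDual ℝ F a).hasFDerivAt (x := x - b)).comp x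
    ((hasFDerivAt_id x).sub_const b)

theorem HasCompactSupport.memC1Zero {N : ℕ} {Ω : Set (Euc N)} {φ : Euc N → ℝ}
    (hc : HasCompactSupport φ) (hφ : ContDiff ℝ 1 φ) (hs : tsupport φ ⊆ Ω) : MemC1Zero Ω φ := by
  have hzero : ∀ x ∉ tsupport φ, φ x = 0 ∧ fderiv ℝ φ x = 0 := fun x hx =>
    ⟨image_eq_zero_of_notMem_tsupport hx,
      image_eq_zero_of_notMem_tsupport fun h => hx (tsupport_fderiv_subset ℝ h)⟩
  refine ⟨hφ, fun x hx => hzero x fun h => hx (hs h), tendsto_const_nhds.congr' ?_⟩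
  filter_upwards [hc.isCompact.compl_mem_cocompact] with x hx
  simp [hzero x hx]

/-- Step 1 reduction: the rough-approximation lemma for continuous, bounded vector
fields. For any open `Ω ⊆ ℝ^N` (`N ≥ 2`) with finite measure, any continuous vector
field `v` on `Ω` with `|v| ≤ Λ` on `Ω`, and any positive `η, ε, ϑ`, there exist a
compact `K ⊆ Ω` and `φ ∈ C¹₀(Ω)` with `ℋ^N(Ω ∖ K) ≤ ε ℋ^N(Ω)`, `sup_Ω |φ| ≤ ϑ`, and
`|v − ∇φ| ≤ η` on `K`. -/
theorem rough_approximation_of_continuous_bounded (N : ℕ) (hN : 2 ≤ N)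
    (Ω : Set (Euc N)) (hΩ : IsOpen Ω) (hfin : μH[N] Ω ≠ ⊤)
    (v : Euc N → Euc N) (hv : ContinuousOn v Ω)
    (Λ : ℝ) (hΛ : ∀ x ∈ Ω, ‖v x‖ ≤ Λ)
    (η ε ϑ : ℝ) (hη : 0 < η) (hε : 0 < ε) (hϑ : 0 < ϑ) :
    ∃ (K : Set (Euc N)) (φ : Euc N → ℝ), IsCompact K ∧ K ⊆ Ω ∧ MemC1Zero Ω φ ∧
      μH[N] (Ω \ K) ≤ ENNReal.ofReal ε * μH[N] Ω ∧
      (∀ x ∈ Ω, |φ x| ≤ ϑ) ∧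
      ∀ x ∈ K, ‖v x - gradient φ x‖ ≤ η := by
  rcases eq_or_ne (μH[N] Ω) 0 with h0 | h0
  · refine ⟨∅, 0, isCompact_empty, empty_subset _, ?_, by simp [h0], by simp [hϑ.le], by simp⟩
    exact HasCompactSupport.zero.memC1Zero contDiff_const (by simp [tsupport])
  have hHaar : (μH[N] : Measure (Euc N)).IsAddHaarMeasure := by
    simpa using isAddHaarMeasure_hausdorffMeasure (E := Euc N)
  have hΛ1 : 0 < |Λ| + 1 := by positivity
  obtain ⟨ρ, hρ, hρη, hρ1, hρϑ⟩ : ∃ ρ > 0, ρ ≤ η ∧ ρ ≤ 1 ∧ ρ ≤ ϑ / (|Λ| + 1) :=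
    ⟨min η (min 1 (ϑ / (|Λ| + 1))), by positivity, min_le_left _ _,
      (min_le_right _ _).trans (min_le_left _ _), (min_le_right _ _).trans (min_le_right _ _)⟩
  -- The graph of `v` is covered by the balls of radius `ρ` around a dense sequence `p`.
  set p := TopologicalSpace.denseSeq (Euc N × Euc N)
  set A : ℕ → Set (Euc N) := fun n => Ω ∩ (fun x => (v x, x)) ⁻¹' Metric.ball (p n) ρ
  have hA : ∀ n, IsOpen (A n) := fun n =>
    (hv.prodMk continuousOn_id).isOpen_inter_preimage hΩ Metric.isOpen_ball
  have hAΩ : ⋃ n, A n = Ω := by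
    refine subset_antisymm (iUnion_subset fun n => inter_subset_left) fun x hx => ?_
    obtain ⟨n, hn⟩ := (TopologicalSpace.denseRange_denseSeq _).exists_dist_lt (v x, x) hρ
    exact mem_iUnion.2 ⟨n, hx, hn⟩
  have hCΩ : ⋃ n, disjointed A n = Ω := iUnion_disjointed.trans hAΩ
  obtain ⟨s, L, hL, hLC, hLμ⟩ := exists_isCompact_subset_measure_diff_biUnion_le
    (μ := (μH[N] : Measure (Euc N))) (MeasurableSet.disjointed fun n => (hA n).measurableSet)
    (by rwa [hCΩ]) (mul_ne_zero (ENNReal.ofReal_pos.2 hε).ne' h0)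
  have hLA : ∀ n, L n ⊆ A n := fun n => (hLC n).trans (disjointed_subset A n)
  obtain ⟨φ, hφ, hφc, hφs, hφb, hφL⟩ := exists_contDiff_patching s hL
    (fun i j hij => (disjoint_disjointed A hij).mono (hLC i) (hLC j)) hA hLA
    (g := fun n x => inner ℝ (p n).1 (x - (p n).2))
    (fun n => contDiff_const.inner ℝ (contDiff_id.sub contDiff_const))
  rw [hAΩ] at hφs
  have hdist : ∀ n, ∀ x ∈ A n, ‖v x - (p n).1‖ < ρ ∧ ‖x - (p n).2‖ < ρ := by
    intro n x hx
    have h := Metric.mem_ball.1 hx.2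
    rwa [Prod.dist_eq, max_lt_iff, dist_eq_norm, dist_eq_norm] at h
  refine ⟨⋃ n ∈ s, L n, φ, s.isCompact_biUnion fun n _ => hL n,
    iUnion₂_subset fun n _ => (hLA n).trans inter_subset_left, hφc.memC1Zero hφ hφs,
    by rwa [hCΩ] at hLμ, fun x _ => ?_, fun x hx => ?_⟩
  · obtain h | ⟨n, hn, h⟩ := hφb x
    · simpa [h] using hϑ.le
    · obtain ⟨hd1, hd2⟩ := hdist n x hn
      have hp : ‖(p n).1‖ ≤ |Λ| + 1 := by
        have := norm_sub_norm_le (p n).1 (v x)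
        rw [norm_sub_rev] at this
        linarith [hΛ x hn.1, le_abs_self Λ]
      calc |φ x| ≤ ‖(p n).1‖ * ‖x - (p n).2‖ := h.trans (abs_real_inner_le_norm _ _)
        _ ≤ (|Λ| + 1) * (ϑ / (|Λ| + 1)) := by gcongr; exact hd2.le.trans hρϑ
        _ = ϑ := mul_div_cancel₀ _ hΛ1.ne'
  · obtain ⟨n, hn, hxn⟩ := mem_iUnion₂.1 hx
    rw [((hasGradientAt_inner_sub (p n).1 (p n).2 x).congr_of_eventuallyEq
      (hφL n hn x hxn)).gradient]
    exact ((hdist n x (hLA n hxn)).1.le).trans hρη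
end
end

section
/- Let N ≥ 2 and let Ω ⊂ ℝ^N be an open set with finite N-dimensional Lebesgue measure. Let v : Ω → ℝ^N be a Borel measurable vector field. Then for all positive real numbers δ and κ there exist an open set A ⊆ Ω and a function φ̃ ∈ C¹₀(Ω) such that ℋ^N(A) ≤ δ·ℋ^N(Ω), sup_{x ∈ Ω} |φ̃(x)| ≤ κ, and v(x) = ∇φ̃(x) for every x ∈ Ω ∖ A. -/
open MeasureTheory Filter

noncomputable section

open Metric Set Topology
open scoped ENNReal

/-- **Lusin's theorem**: a measurable map into a second countable space is continuous on a compact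
set filling a given set of finite measure up to an arbitrarily small error. -/
theorem Measurable.exists_isCompact_continuousOn {X Y : Type*} [TopologicalSpace X] [T2Space X]
    [MeasurableSpace X] [BorelSpace X] [TopologicalSpace Y] [SecondCountableTopology Y]
    [MeasurableSpace Y] [OpensMeasurableSpace Y] {μ : Measure X}
    [μ.InnerRegularCompactLTTop] {f : X → Y} (hf : Measurable f) {s : Set X}
    (hs : MeasurableSet s) (hμs : μ s ≠ ∞) {ε : ℝ≥0∞} (hε : ε ≠ 0) :
    ∃ K ⊆ s, IsCompact K ∧ μ (s \ K) ≤ ε ∧ ContinuousOn f K := by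
  let b := TopologicalSpace.countableBasis Y
  have hb := TopologicalSpace.isBasis_countableBasis Y
  have : Countable b := (TopologicalSpace.countable_countableBasis Y).to_subtype
  have hε3 : ε / 3 ≠ 0 := ENNReal.div_ne_zero.2 ⟨hε, by simp⟩
  obtain ⟨e, he, hsum⟩ := ENNReal.exists_pos_sum_of_countable' hε3 b
  obtain ⟨K₀, hK₀s, hK₀, hμK₀⟩ := hs.exists_isCompact_sdiff_lt hμs hε3
  have hmeas : ∀ o : b, MeasurableSet (f ⁻¹' o) := fun o => hf (hb.isOpen o.2).measurableSet
  have hC : ∀ o : b, ∃ C ⊆ s ∩ f ⁻¹' o, IsCompact C ∧ μ ((s ∩ f ⁻¹' o) \ C) < e o := fun o =>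
    (hs.inter (hmeas o)).exists_isCompact_sdiff_lt
      (measure_ne_top_of_subset inter_subset_left hμs) (he o).ne'
  have hD : ∀ o : b, ∃ D ⊆ s \ f ⁻¹' o, IsCompact D ∧ μ ((s \ f ⁻¹' o) \ D) < e o := fun o =>
    (hs.diff (hmeas o)).exists_isCompact_sdiff_lt
      (measure_ne_top_of_subset sdiff_subset hμs) (he o).ne'
  choose C hCs hCc hCμ using hC
  choose D hDs hDc hDμ using hD
  refine ⟨K₀ ∩ ⋂ o, (C o ∪ D o), inter_subset_left.trans hK₀s,
    hK₀.inter_right (isClosed_iInter fun o => ((hCc o).union (hDc o)).isClosed), ?_, ?_⟩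
  · have hsub : s \ (K₀ ∩ ⋂ o, (C o ∪ D o)) ⊆
        (s \ K₀) ∪ ((⋃ o : b, (s ∩ f ⁻¹' o) \ C o) ∪ ⋃ o : b, (s \ f ⁻¹' o) \ D o) := by
      rintro x ⟨hxs, hx⟩
      by_contra hcon
      simp only [mem_union, mem_iUnion, Set.mem_sdiff, mem_inter_iff, not_or, not_exists, not_and,
        not_not, mem_iInter] at hcon hx
      obtain ⟨h₁, h₂, h₃⟩ := hcon
      refine hx (h₁ hxs) fun o => ?_
      by_cases hxo : x ∈ f ⁻¹' (o : Set Y)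
      · exact Or.inl (h₂ o ⟨hxs, hxo⟩)
      · exact Or.inr (h₃ o ⟨hxs, hxo⟩)
    calc μ (s \ (K₀ ∩ ⋂ o, (C o ∪ D o)))
        ≤ μ (s \ K₀) + (μ (⋃ o : b, (s ∩ f ⁻¹' o) \ C o) + μ (⋃ o : b, (s \ f ⁻¹' o) \ D o)) :=
          (measure_mono hsub).trans ((measure_union_le _ _).trans
            (add_le_add_right (measure_union_le _ _) _))
      _ ≤ ε / 3 + (ε / 3 + ε / 3) := by
          gcongr
          · exact (measure_iUnion_le _).trans
              ((ENNReal.tsum_le_tsum fun o => (hCμ o).le).trans hsum.le)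
          · exact (measure_iUnion_le _).trans
              ((ENNReal.tsum_le_tsum fun o => (hDμ o).le).trans hsum.le)
      _ = ε := by rw [← add_assoc, ENNReal.add_thirds]
  · intro x hx
    refine (hb.nhds_hasBasis.tendsto_right_iff).2 fun o ⟨ho, hxo⟩ => ?_
    have hxD : x ∈ (D ⟨o, ho⟩)ᶜ := fun h => (hDs ⟨o, ho⟩ h).2 hxo
    filter_upwards [self_mem_nhdsWithin,
      mem_nhdsWithin_of_mem_nhds ((hDc ⟨o, ho⟩).isClosed.isOpen_compl.mem_nhds hxD)] with y hy hyD
    exact (hCs _ (((mem_iInter.1 hy.2) ⟨o, ho⟩).resolve_right hyD)).2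

section Potential

variable {E : Type*} [NormedAddCommGroup E] [NormedSpace ℝ E]

/-- A finite sum of functions with topological supports in pairwise disjoint sets agrees near each
point with at most one of its terms. -/
theorem fderiv_sum_eq_of_pairwiseDisjoint {ι : Type*} {F : Finset ι} {ψ : ι → E → ℝ}
    {B : ι → Set E} (hB : (F : Set ι).PairwiseDisjoint B) (hψ : ∀ i ∈ F, ContDiff ℝ 1 (ψ i))
    (hsupp : ∀ i ∈ F, tsupport (ψ i) ⊆ B i) {i : ι} (hi : i ∈ F) {x : E} (hx : x ∈ B i) :
    ∑ j ∈ F, ψ j x = ψ i x ∧ fderiv ℝ (fun y => ∑ j ∈ F, ψ j y) x = fderiv ℝ (ψ i) x := by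
  have hne : ∀ j ∈ F, j ≠ i → x ∉ tsupport (ψ j) := fun j hj hji h =>
    (disjoint_left.1 (hB hj hi hji)) (hsupp j hj h) hx
  constructor
  · exact Finset.sum_eq_single_of_mem i hi fun j hj hji =>
      image_eq_zero_of_notMem_tsupport (hne j hj hji)
  · rw [fderiv_fun_sum fun j hj => (hψ j hj).differentiable one_ne_zero x]
    exact Finset.sum_eq_single_of_mem i hi fun j hj hji =>
      Function.notMem_support.1 fun h => hne j hj hji (support_fderiv_subset ℝ h)

variable [FiniteDimensional ℝ E]

/-- Cutting off a linear form outside a ball: the gradient is still controlled by the norm of the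
form, with a constant independent of the radius, and it is unchanged on a slightly smaller ball. -/
theorem exists_contDiff_tsupport_subset_closedBall_fderiv_eq {t : ℝ} (ht₀ : 0 < t) (ht₁ : t < 1) :
    ∃ C : ℝ, 0 ≤ C ∧ ∀ (a : E →L[ℝ] ℝ) (c : E) (r : ℝ), 0 < r → ∃ ψ : E → ℝ, ContDiff ℝ 1 ψ ∧
      tsupport ψ ⊆ closedBall c r ∧ (∀ x, |ψ x| ≤ ‖a‖ * r) ∧ (∀ x, ‖fderiv ℝ ψ x‖ ≤ C * ‖a‖) ∧
      ∀ x ∈ closedBall c (t * r), fderiv ℝ ψ x = a := by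
  let f : ContDiffBump (0 : E) := ⟨(1 + t) / 2, 1, by linarith, by linarith⟩
  have hf : ContDiff ℝ 1 f := f.contDiff
  obtain ⟨C, hC⟩ := (hf.continuous_fderiv one_ne_zero).bounded_above_of_compact_support
    (f.hasCompactSupport.fderiv ℝ)
  have hC₀ : 0 ≤ C := (norm_nonneg _).trans (hC 0)
  refine ⟨1 + C, by linarith, fun a c r hr => ?_⟩
  have hmem : ∀ (x : E) (ρ : ℝ), r⁻¹ • (x - c) ∈ closedBall (0 : E) ρ ↔ ‖x - c‖ ≤ ρ * r := by
    intro x ρ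
    rw [mem_closedBall_zero_iff, norm_smul, norm_inv, Real.norm_of_nonneg hr.le,
      inv_mul_le_iff₀ hr, mul_comm]
  let ψ : E → ℝ := fun x => f (r⁻¹ • (x - c)) * a (x - c)
  have hsupp : tsupport ψ ⊆ closedBall c r := by
    refine closure_minimal (fun x hx => ?_) isClosed_closedBall
    by_contra hx'
    refine hx ?_
    have : f (r⁻¹ • (x - c)) = 0 := by
      apply f.zero_of_le_dist
      have := mt (hmem x 1).1 (by rwa [one_mul, ← dist_eq_norm, ← mem_closedBall])
      exact (not_le.1 this).le
    simp [ψ, this]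
  have hψ : ContDiff ℝ 1 ψ := by
    have h₁ : ContDiff ℝ 1 fun x : E => r⁻¹ • (x - c) := by fun_prop
    have h₂ : ContDiff ℝ 1 fun x : E => a (x - c) := by fun_prop
    exact (hf.comp h₁).mul h₂
  have hderiv : ∀ x, HasFDerivAt ψ (f (r⁻¹ • (x - c)) • a +
      a (x - c) • (r⁻¹ • fderiv ℝ f (r⁻¹ • (x - c)))) x := by
    intro x
    have h₁ : HasFDerivAt (fun x : E => r⁻¹ • (x - c)) (r⁻¹ • ContinuousLinearMap.id ℝ E) x :=
      ((hasFDerivAt_id x).sub_const c).const_smul r⁻¹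
    have h₂ : HasFDerivAt (fun x : E => a (x - c)) a x :=
      a.hasFDerivAt.comp x ((hasFDerivAt_id x).sub_const c)
    have h₃ := ((hf.differentiable one_ne_zero) (r⁻¹ • (x - c))).hasFDerivAt.comp x h₁
    exact (h₃.mul h₂).congr_fderiv (by ext; simp)
  refine ⟨ψ, hψ, hsupp, fun x => ?_, fun x => ?_, fun x hx => ?_⟩
  · by_cases hx : x ∈ closedBall c r
    · rw [mem_closedBall, dist_eq_norm] at hx
      calc |ψ x| = f (r⁻¹ • (x - c)) * |a (x - c)| := by
            rw [abs_mul, abs_of_nonneg f.nonneg]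
        _ ≤ 1 * (‖a‖ * ‖x - c‖) := by
            gcongr
            · exact f.le_one
            · exact a.le_opNorm _
        _ ≤ ‖a‖ * r := by rw [one_mul]; gcongr
    · rw [image_eq_zero_of_notMem_tsupport fun h => hx (hsupp h), abs_zero]
      positivity
  · by_cases hx : x ∈ closedBall c r
    · rw [mem_closedBall, dist_eq_norm] at hx
      rw [(hderiv x).fderiv]
      calc _ ≤ ‖f (r⁻¹ • (x - c)) • a‖ + ‖a (x - c) • (r⁻¹ • fderiv ℝ f (r⁻¹ • (x - c)))‖ :=
            norm_add_le _ _
        _ = f (r⁻¹ • (x - c)) * ‖a‖ + ‖a (x - c)‖ * (r⁻¹ * ‖fderiv ℝ f (r⁻¹ • (x - c))‖) := by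
            rw [norm_smul, norm_smul, norm_smul, Real.norm_of_nonneg f.nonneg, norm_inv,
              Real.norm_of_nonneg hr.le]
        _ ≤ 1 * ‖a‖ + (‖a‖ * r) * (r⁻¹ * C) := by
            gcongr
            · exact f.le_one
            · exact (a.le_opNorm _).trans (by gcongr)
            · exact hC _
        _ = (1 + C) * ‖a‖ := by field_simp
    · rw [Function.notMem_support.1 fun h => hx (hsupp (support_fderiv_subset ℝ h)), norm_zero]
      positivity
  · have hlt : r⁻¹ • (x - c) ∈ ball (0 : E) ((1 + t) / 2) := by
      rw [mem_closedBall, dist_eq_norm] at hx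
      exact closedBall_subset_ball (by linarith) ((hmem x t).2 hx)
    have hone : f (r⁻¹ • (x - c)) = 1 := f.one_of_mem_closedBall (ball_subset_closedBall hlt)
    have hzero : fderiv ℝ f (r⁻¹ • (x - c)) = 0 := by
      rw [(f.eventuallyEq_one_of_mem_ball hlt).fderiv_eq]
      exact fderiv_const_apply 1
    rw [(hderiv x).fderiv, hone, hzero]
    simp


variable [MeasurableSpace E] [BorelSpace E] (μ : Measure E) [μ.IsAddHaarMeasure]

/-- In an open set of finite measure, a continuous field of linear forms on a compact set is, up to
a small measure, uniformly close to the gradient of a uniformly small function whose gradient is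
controlled by the size of the field. -/
theorem exists_contDiff_fderiv_near {U : Set E} (hU : IsOpen U)
    (hμU : μ U ≠ ∞) {ε : ℝ≥0∞} (hε : ε ≠ 0) :
    ∃ C : ℝ, 0 ≤ C ∧ ∀ (K : Set E) (w : E → E →L[ℝ] ℝ) (M η κ : ℝ), IsCompact K → K ⊆ U →
      ContinuousOn w K → 0 ≤ M → (∀ x ∈ K, ‖w x‖ ≤ M) → 0 < η → 0 < κ →
      ∃ (K' : Set E) (φ : E → ℝ), K' ⊆ K ∧ IsCompact K' ∧ μ (K \ K') ≤ ε ∧ ContDiff ℝ 1 φ ∧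
        tsupport φ ⊆ U ∧ (∀ x, |φ x| ≤ κ) ∧ (∀ x, ‖fderiv ℝ φ x‖ ≤ C * M) ∧
        ∀ x ∈ K', ‖w x - fderiv ℝ φ x‖ ≤ η := by
  have hε2 : 0 < ε / 2 := ENNReal.half_pos hε
  obtain ⟨t, htε, ht₀, ht₁⟩ : ∃ t : ℝ,
      ENNReal.ofReal (1 - t ^ Module.finrank ℝ E) * μ U < ε / 2 ∧ 0 < t ∧ t < 1 := by
    have hcont : Tendsto (fun t : ℝ => ENNReal.ofReal (1 - t ^ Module.finrank ℝ E) * μ U)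
        (𝓝[<] 1) (𝓝 0) := by
      have h₁ : Tendsto (fun t : ℝ => ENNReal.ofReal (1 - t ^ Module.finrank ℝ E)) (𝓝[<] 1)
          (𝓝 0) := by
        have : Continuous fun t : ℝ => ENNReal.ofReal (1 - t ^ Module.finrank ℝ E) :=
          ENNReal.continuous_ofReal.comp (by fun_prop)
        simpa using (this.tendsto 1).mono_left nhdsWithin_le_nhds
      simpa using ENNReal.Tendsto.mul_const h₁ (Or.inr hμU)
    have h₂ : ∀ᶠ t : ℝ in 𝓝[<] 1, 0 < t ∧ t < 1 := Ioo_mem_nhdsLT one_pos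
    exact ((hcont.eventually_lt_const hε2).and h₂).exists
  obtain ⟨C, hC₀, hC⟩ := exists_contDiff_tsupport_subset_closedBall_fderiv_eq (E := E) ht₀ ht₁
  refine ⟨C, hC₀, fun K w M η κ hK hKU hw hM hwM hη hκ => ?_⟩
  have hR : ∀ x ∈ K, ∃ R > 0, R * M ≤ κ ∧ closedBall x R ⊆ U ∧
      ∀ y ∈ K ∩ closedBall x R, ‖w y - w x‖ ≤ η := by
    intro x hx
    obtain ⟨R₁, hR₁, hR₁U⟩ := nhds_basis_closedBall.mem_iff.1 (hU.mem_nhds (hKU hx))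
    obtain ⟨R₂, hR₂, hR₂w⟩ := Metric.continuousOn_iff.1 hw x hx η hη
    refine ⟨min R₁ (min (R₂ / 2) (κ / (M + 1))), by positivity, ?_, ?_, ?_⟩
    · calc _ ≤ κ / (M + 1) * M := by
            gcongr
            exact (min_le_right _ _).trans (min_le_right _ _)
        _ ≤ κ / (M + 1) * (M + 1) := by gcongr; linarith
        _ = κ := by field_simp
    · exact (closedBall_subset_closedBall (min_le_left _ _)).trans hR₁U
    · rintro y ⟨hyK, hy⟩
      rw [← dist_eq_norm]
      refine (hR₂w y hyK ?_).le
      have : dist y x ≤ R₂ / 2 :=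
        (mem_closedBall.1 hy).trans ((min_le_right _ _).trans (min_le_left _ _))
      linarith
  choose! R hR₀ hRM hRU hRw using hR
  obtain ⟨s, r, hs, hsK, hr, hcover, hdisj⟩ :=
    Besicovitch.exists_disjoint_closedBall_covering_ae μ (fun _ => univ) K
      (fun x _ δ hδ => ⟨δ / 2, mem_univ _, by constructor <;> linarith⟩) R hR₀
  have hr₀ : ∀ x ∈ s, 0 < r x := fun x hx => (hr x hx).2.1
  have hrR : ∀ x ∈ s, r x ≤ R x := fun x hx => (hr x hx).2.2.le
  have hBR : ∀ x ∈ s, closedBall x (r x) ⊆ closedBall x (R x) := fun x hx =>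
    closedBall_subset_closedBall (hrR x hx)
  have : Countable s := hs.to_subtype
  have hsum : ∑' x : s, μ (closedBall (x : E) (r x)) ≤ μ U := by
    rw [← measure_iUnion (fun (x y : s) hxy => hdisj x.2 y.2 fun h => hxy (Subtype.ext h))
      fun x : s => measurableSet_closedBall]
    exact measure_mono (iUnion_subset fun x => (hBR x x.2).trans (hRU x (hsK x.2)))
  obtain ⟨F, hF⟩ := ((ENNReal.tendsto_tsum_compl_atTop_zero
    (ne_top_of_le_ne_top hμU hsum)).eventually_lt_const hε2).exists
  have hψ : ∀ x : s, _ := fun x => hC (w x) x (r x) (hr₀ x x.2)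
  choose ψ hψd hψs hψb hψg hψe using hψ
  have hdisjF : (F : Set s).PairwiseDisjoint fun x : s => closedBall (x : E) (r x) :=
    fun x _ y _ hxy => hdisj x.2 y.2 fun h => hxy (Subtype.ext h)
  have hloc := fun (x : s) (hx : x ∈ F) (y : E) (hy : y ∈ closedBall (x : E) (r x)) =>
    fderiv_sum_eq_of_pairwiseDisjoint hdisjF (fun i _ => hψd i) (fun i _ => hψs i) hx hy
  have hclosed : IsClosed (⋃ x ∈ F, closedBall (x : E) (r x)) :=
    F.finite_toSet.isClosed_biUnion fun x _ => isClosed_closedBall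
  have hsupp : tsupport (fun y => ∑ x ∈ F, ψ x y) ⊆ ⋃ x ∈ F, closedBall (x : E) (r x) := by
    refine closure_minimal (fun y hy => ?_) hclosed
    obtain ⟨x, hx, hxy⟩ := Finset.exists_ne_zero_of_sum_ne_zero hy
    exact mem_biUnion hx (hψs x (subset_tsupport _ hxy))
  refine ⟨K ∩ ⋃ x ∈ F, closedBall (x : E) (t * r x), fun y => ∑ x ∈ F, ψ x y, inter_subset_left,
    hK.inter_right (F.finite_toSet.isClosed_biUnion fun x _ => isClosed_closedBall), ?_,
    ContDiff.sum fun x _ => hψd x,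
    hsupp.trans (iUnion₂_subset fun x _ => (hBR x x.2).trans (hRU x (hsK x.2))), ?_, ?_, ?_⟩
  · have hsub : K \ (K ∩ ⋃ x ∈ F, closedBall (x : E) (t * r x)) ⊆
        (K \ ⋃ x ∈ s, closedBall x (r x)) ∪
          ((⋃ x : {x : s // x ∉ F}, closedBall (x : E) (r x)) ∪
            ⋃ x : s, closedBall (x : E) (r x) \ closedBall (x : E) (t * r x)) := by
      rintro y ⟨hyK, hy⟩
      by_cases hys : y ∈ ⋃ x ∈ s, closedBall x (r x)
      · obtain ⟨x, hx, hyx⟩ := mem_iUnion₂.1 hys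
        by_cases hxF : (⟨x, hx⟩ : s) ∈ F
        · refine Or.inr (Or.inr (mem_iUnion.2 ⟨⟨x, hx⟩, hyx, fun h => hy ⟨hyK, ?_⟩⟩))
          exact mem_biUnion hxF h
        · exact Or.inr (Or.inl (mem_iUnion.2 ⟨⟨⟨x, hx⟩, hxF⟩, hyx⟩))
      · exact Or.inl ⟨hyK, hys⟩
    have hshell : ∀ x : s, μ (closedBall (x : E) (r x) \ closedBall (x : E) (t * r x)) =
        ENNReal.ofReal (1 - t ^ Module.finrank ℝ E) * μ (closedBall (x : E) (r x)) := by
      intro x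
      have hle : t * r x ≤ r x := by nlinarith [hr₀ x x.2]
      rw [measure_sdiff (closedBall_subset_closedBall hle)
        measurableSet_closedBall.nullMeasurableSet measure_closedBall_lt_top.ne,
        Measure.addHaar_closedBall_mul μ _ ht₀.le (hr₀ x x.2).le,
        Measure.addHaar_closedBall_center μ (x : E),
        ENNReal.ofReal_sub _ (by positivity), ENNReal.ofReal_one, ENNReal.sub_mul, one_mul]
      exact fun _ _ => measure_closedBall_lt_top.ne
    calc μ (K \ (K ∩ ⋃ x ∈ F, closedBall (x : E) (t * r x)))
        ≤ μ (K \ ⋃ x ∈ s, closedBall x (r x)) +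
          (μ (⋃ x : {x : s // x ∉ F}, closedBall (x : E) (r x)) +
            μ (⋃ x : s, closedBall (x : E) (r x) \ closedBall (x : E) (t * r x))) :=
          (measure_mono hsub).trans ((measure_union_le _ _).trans
            (add_le_add_right (measure_union_le _ _) _))
      _ ≤ 0 + (ε / 2 + ε / 2) := by
          gcongr
          · exact hcover.le
          · exact (measure_iUnion_le _).trans hF.le
          · refine (measure_iUnion_le _).trans ?_
            simp_rw [hshell]
            rw [ENNReal.tsum_mul_left]
            exact (mul_le_mul_right hsum _).trans htε.le
      _ = ε := by rw [zero_add, ENNReal.add_halves]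
  · intro y
    by_cases hy : y ∈ ⋃ x ∈ F, closedBall (x : E) (r x)
    · obtain ⟨x, hx, hyx⟩ := mem_iUnion₂.1 hy
      simp only [(hloc x hx y hyx).1]
      have hxK := hsK x.2
      calc |ψ x y| ≤ ‖w x‖ * r x := hψb x y
        _ ≤ M * R x := mul_le_mul (hwM x hxK) (hrR x x.2) (hr₀ x x.2).le hM
        _ ≤ κ := by rw [mul_comm]; exact hRM x hxK
    · have hzero := image_eq_zero_of_notMem_tsupport fun h => hy (hsupp h)
      simpa only [hzero, abs_zero] using hκ.le
  · intro y
    by_cases hy : y ∈ ⋃ x ∈ F, closedBall (x : E) (r x)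
    · obtain ⟨x, hx, hyx⟩ := mem_iUnion₂.1 hy
      rw [(hloc x hx y hyx).2]
      exact (hψg x y).trans (mul_le_mul_of_nonneg_left (hwM x (hsK x.2)) hC₀)
    · rw [Function.notMem_support.1 fun h => hy (hsupp (support_fderiv_subset ℝ h)), norm_zero]
      positivity
  · rintro y ⟨hyK, hy⟩
    obtain ⟨x, hx, hyx⟩ := mem_iUnion₂.1 hy
    have hyx' : y ∈ closedBall (x : E) (r x) :=
      closedBall_subset_closedBall (by nlinarith [hr₀ x x.2]) hyx
    rw [(hloc x hx y hyx').2, hψe x y hyx]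
    exact hRw x (hsK x.2) y ⟨hyK, hBR x x.2 hyx'⟩

/-- **Alberti's theorem**: in an open set of finite measure, a measurable field of linear forms
coincides, up to an arbitrarily small measure, with the derivative of an arbitrarily small
compactly supported `C¹` function. -/
theorem exists_contDiff_fderiv_eq_on_compact {Ω : Set E} (hΩ : IsOpen Ω) (hμΩ : μ Ω ≠ ∞)
    {v : E → E →L[ℝ] ℝ} (hv : Measurable v) {ε : ℝ≥0∞} (hε : ε ≠ 0) {κ : ℝ} (hκ : 0 < κ) :
    ∃ (K : Set E) (φ : E → ℝ), K ⊆ Ω ∧ IsCompact K ∧ μ (Ω \ K) ≤ ε ∧ ContDiff ℝ 1 φ ∧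
      HasCompactSupport φ ∧ tsupport φ ⊆ Ω ∧ (∀ x, |φ x| ≤ κ) ∧ ∀ x ∈ K, fderiv ℝ φ x = v x := by
  have hε2 : ε / 2 ≠ 0 := (ENNReal.half_pos hε).ne'
  obtain ⟨K₀, hK₀Ω, hK₀, hμK₀, hvK₀⟩ := hv.exists_isCompact_continuousOn hΩ.measurableSet hμΩ hε2
  obtain ⟨L, hL, hK₀L, hLΩ⟩ := exists_compact_between hK₀ hΩ hK₀Ω
  obtain ⟨M₀, hM₀⟩ := hK₀.exists_bound_of_continuousOn hvK₀
  obtain ⟨e, he, hesum⟩ := ENNReal.exists_pos_sum_of_countable' hε2 ℕ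
  have hμL : μ (interior L) ≠ ∞ := measure_ne_top_of_subset interior_subset hL.measure_ne_top
  choose C hC₀ hC using fun n => exists_contDiff_fderiv_near μ isOpen_interior hμL (he n).ne'
  let M : ℕ → ℝ := fun n => Nat.casesOn n |M₀| fun k => (1 / 2) ^ k / (1 + C (k + 1))
  have hMpos : ∀ n, 0 < M (n + 1) := fun n => by
    have := hC₀ (n + 1)
    change 0 < (1 / 2 : ℝ) ^ n / (1 + C (n + 1))
    positivity
  have hM : ∀ n, 0 ≤ M n
    | 0 => abs_nonneg _
    | n + 1 => (hMpos n).le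
  have hMle : ∀ n, M (n + 1) ≤ (1 / 2) ^ n := fun n =>
    div_le_self (by positivity) (by linarith [hC₀ (n + 1)])
  have hCM : Summable fun n => C n * M n := by
    refine (summable_nat_add_iff 1).1 (Summable.of_nonneg_of_le
      (fun n => mul_nonneg (hC₀ _) (hM (n + 1))) (fun n => ?_) summable_geometric_two)
    have := hC₀ (n + 1)
    change C (n + 1) * ((1 / 2 : ℝ) ^ n / (1 + C (n + 1))) ≤ (1 / 2) ^ n
    rw [mul_div_assoc', div_le_iff₀ (by positivity), mul_comm]
    gcongr
    linarith
  let P : ℕ → Set E × (E → ℝ) → Prop := fun n p => p.1 ⊆ K₀ ∧ IsCompact p.1 ∧ ContDiff ℝ 1 p.2 ∧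
    (∀ x ∉ L, p.2 x = 0) ∧ ∀ x ∈ p.1, ‖v x - fderiv ℝ p.2 x‖ ≤ M n
  have hstep : ∀ n p, P n p → ∃ q, P (n + 1) q ∧ μ (p.1 \ q.1) ≤ e n ∧
      (∀ x, |q.2 x - p.2 x| ≤ κ / 2 / 2 ^ n) ∧
      ∀ x, ‖fderiv ℝ (fun y => q.2 y - p.2 y) x‖ ≤ C n * M n := by
    rintro n ⟨K, Φ⟩ ⟨hKK₀, hK, hΦ, hΦL, hvΦ⟩
    obtain ⟨K', φ, hK'K, hK', hμK', hφ, hφL, hφκ, hφC, hφw⟩ :=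
      hC n K (fun x => v x - fderiv ℝ Φ x) (M n) (M (n + 1)) (κ / 2 / 2 ^ n) hK (hKK₀.trans hK₀L)
        ((hvK₀.mono hKK₀).sub (hΦ.continuous_fderiv one_ne_zero).continuousOn) (hM n) hvΦ
        (hMpos n) (by positivity)
    refine ⟨(K', fun x => Φ x + φ x), ⟨hK'K.trans hKK₀, hK', hΦ.add hφ, fun x hx => ?_,
      fun x hx => ?_⟩, hμK', fun x => ?_, fun x => ?_⟩
    · have : φ x = 0 := image_eq_zero_of_notMem_tsupport fun h => hx (interior_subset (hφL h))
      simpa [this] using hΦL x hx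
    · simp only
      rw [fderiv_fun_add (hΦ.differentiable one_ne_zero x) (hφ.differentiable one_ne_zero x),
        ← sub_sub]
      exact hφw x hx
    · simpa using hφκ x
    · simpa using hφC x
  choose! next hnextP hnextμ hnextκ hnextC using hstep
  let p : ℕ → Set E × (E → ℝ) := fun n => Nat.rec (K₀, fun _ => 0) next n
  have hp : ∀ n, P n (p n) := by
    intro n
    induction n with
    | zero =>
      refine ⟨subset_rfl, hK₀, contDiff_const, fun _ _ => rfl, fun x hx => ?_⟩
      change ‖v x - fderiv ℝ (fun _ => (0 : ℝ)) x‖ ≤ |M₀|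
      simpa using (hM₀ x hx).trans (le_abs_self _)
    | succ n ih => exact hnextP n _ ih
  have hpμ : ∀ n, μ ((p n).1 \ (p (n + 1)).1) ≤ e n := fun n => hnextμ n _ (hp n)
  let φ : ℕ → E → ℝ := fun n x => (p (n + 1)).2 x - (p n).2 x
  have hφκ : ∀ n x, ‖φ n x‖ ≤ κ / 2 / 2 ^ n := fun n => hnextκ n _ (hp n)
  have hφC : ∀ n x, ‖fderiv ℝ (φ n) x‖ ≤ C n * M n := fun n => hnextC n _ (hp n)
  have hφd : ∀ n, ContDiff ℝ 1 (φ n) := fun n => (hp (n + 1)).2.2.1.sub (hp n).2.2.1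
  have hsum : ∀ n x, ∑ i ∈ Finset.range n, φ i x = (p n).2 x := fun n x => by
    rw [Finset.sum_range_sub (fun i => (p i).2 x)]
    exact sub_zero _
  have hderiv : ∀ x, HasFDerivAt (fun y => ∑' n, φ n y) (∑' n, fderiv ℝ (φ n) x) x :=
    hasFDerivAt_tsum hCM (fun n x => ((hφd n).differentiable one_ne_zero x).hasFDerivAt) hφC
      (x₀ := 0) (Summable.of_norm_bounded (hasSum_geometric_two' κ).summable fun n => hφκ n 0)
  have hfderiv : fderiv ℝ (fun y => ∑' n, φ n y) = fun x => ∑' n, fderiv ℝ (φ n) x :=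
    funext fun x => (hderiv x).fderiv
  have hsupp : tsupport (fun y => ∑' n, φ n y) ⊆ L := by
    refine closure_minimal (fun x hx => ?_) hL.isClosed
    by_contra hxL
    refine hx ?_
    simp [φ, (hp _).2.2.2.1 x hxL]
  refine ⟨⋂ n, (p n).1, fun y => ∑' n, φ n y, (iInter_subset _ 0).trans hK₀Ω,
    hK₀.of_isClosed_subset (isClosed_iInter fun n => (hp n).2.1.isClosed) (iInter_subset _ 0), ?_,
    ?_, HasCompactSupport.of_support_subset_isCompact hL ((subset_tsupport _).trans hsupp),
    hsupp.trans hLΩ, fun x => ?_, fun x hx => ?_⟩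
  · have hsub : Ω \ ⋂ n, (p n).1 ⊆ (Ω \ K₀) ∪ ⋃ n, (p n).1 \ (p (n + 1)).1 := by
      rintro x ⟨hxΩ, hx⟩
      by_contra hcon
      simp only [mem_union, mem_iUnion, Set.mem_sdiff, not_or, not_exists, not_and, not_not] at hcon
      refine hx (mem_iInter.2 fun n => ?_)
      induction n with
      | zero => exact hcon.1 hxΩ
      | succ n ih => exact hcon.2 n ih
    calc μ (Ω \ ⋂ n, (p n).1) ≤ μ (Ω \ K₀) + μ (⋃ n, (p n).1 \ (p (n + 1)).1) :=
          (measure_mono hsub).trans (measure_union_le _ _)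
      _ ≤ ε / 2 + ε / 2 := by
          gcongr
          exact (measure_iUnion_le _).trans ((ENNReal.tsum_le_tsum hpμ).trans hesum.le)
      _ = ε := ENNReal.add_halves ε
  · refine contDiff_one_iff_fderiv.2 ⟨fun x => (hderiv x).differentiableAt, ?_⟩
    rw [hfderiv]
    exact continuous_tsum (fun n => (hφd n).continuous_fderiv one_ne_zero) hCM hφC
  · exact tsum_of_norm_bounded (hasSum_geometric_two' κ) fun n => hφκ n x
  · rw [hfderiv]
    have hlim : Tendsto (fun n => ∑ i ∈ Finset.range n, fderiv ℝ (φ i) x) atTop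
        (𝓝 (∑' n, fderiv ℝ (φ n) x)) :=
      (Summable.of_norm_bounded hCM fun n => hφC n x).hasSum.tendsto_sum_nat
    have hpartial : ∀ n, ∑ i ∈ Finset.range n, fderiv ℝ (φ i) x = fderiv ℝ (p n).2 x := fun n => by
      rw [← fderiv_fun_sum fun i _ => (hφd i).differentiable one_ne_zero x]
      exact congrArg (fderiv ℝ · x) (funext (hsum n))
    refine tendsto_nhds_unique ((tendsto_add_atTop_iff_nat 1).2 hlim) ?_
    rw [tendsto_iff_norm_sub_tendsto_zero]
    refine squeeze_zero (fun n => norm_nonneg _) (fun n => ?_)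
      (tendsto_pow_atTop_nhds_zero_of_lt_one (r := (1 / 2 : ℝ)) (by norm_num) (by norm_num))
    rw [hpartial, norm_sub_rev]
    exact ((hp (n + 1)).2.2.2.2 x (mem_iInter.1 hx (n + 1))).trans (hMle n)

end Potential

/-- **Alberti's theorem, refined version with a uniformly small potential.** For any
open `Ω ⊆ ℝ^N` (`N ≥ 2`) with finite measure, any Borel vector field `v` and any
positive `δ, κ`, there are an open `A ⊆ Ω` and `φ̃ ∈ C¹₀(Ω)` with
`ℋ^N(A) ≤ δ ℋ^N(Ω)`, `sup_Ω |φ̃| ≤ κ`, and `v = ∇φ̃` on `Ω ∖ A`. -/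
theorem alberti_refined (N : ℕ) (hN : 2 ≤ N) (Ω : Set (Euc N)) (hΩ : IsOpen Ω)
    (hfin : μH[N] Ω ≠ ⊤) (v : Euc N → Euc N) (hv : Measurable v)
    (δ κ : ℝ) (hδ : 0 < δ) (hκ : 0 < κ) :
    ∃ (A : Set (Euc N)) (φt : Euc N → ℝ), IsOpen A ∧ A ⊆ Ω ∧ MemC1Zero Ω φt ∧
      μH[N] A ≤ ENNReal.ofReal δ * μH[N] Ω ∧
      (∀ x ∈ Ω, |φt x| ≤ κ) ∧
      ∀ x ∈ Ω \ A, v x = gradient φt x := by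
  rcases Ω.eq_empty_or_nonempty with rfl | hne
  · refine ⟨∅, fun _ => 0, isOpen_empty, subset_rfl, ⟨contDiff_const, by simp,
      by simpa using tendsto_const_nhds⟩, ?_, ?_, ?_⟩
      <;> simp
  have hε : ENNReal.ofReal δ * μH[N] Ω ≠ 0 :=
    mul_ne_zero (ENNReal.ofReal_pos.2 hδ).ne' (hΩ.measure_pos _ hne).ne'
  have hv' : Measurable fun x => InnerProductSpace.toDual ℝ (Euc N) (v x) :=
    (InnerProductSpace.toDual ℝ (Euc N)).continuous.measurable.comp hv
  obtain ⟨K, φ, hKΩ, hK, hμK, hφ, hφc, hφΩ, hφκ, hφv⟩ :=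
    exists_contDiff_fderiv_eq_on_compact μH[N] hΩ hfin hv' hε hκ
  refine ⟨Ω \ K, φ, hΩ.sdiff hK.isClosed, sdiff_subset, ⟨hφ, fun x hx => ?_, ?_⟩, hμK,
    fun x _ => hφκ x, fun x hx => ?_⟩
  · exact ⟨image_eq_zero_of_notMem_tsupport fun h => hx (hφΩ h),
      Function.notMem_support.1 fun h => hx (hφΩ (support_fderiv_subset ℝ h))⟩
  · refine tendsto_const_nhds.congr' ?_
    filter_upwards [hφc.isCompact.compl_mem_cocompact] with x hx
    rw [image_eq_zero_of_notMem_tsupport hx,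
      Function.notMem_support.1 fun h => hx (support_fderiv_subset ℝ h)]
    simp
  · have hxK : x ∈ K := by_contra fun h => hx.2 ⟨hx.1, h⟩
    rw [gradient, hφv x hxK, LinearIsometryEquiv.symm_apply_apply]
end
end

section
/- Let m ≥ 2 and 1 ≤ k ≤ m, let Ω ⊂ ℝ^m be an open set with finite m-dimensional Lebesgue measure, and let ω be a smooth differential k-form on ℝ^m whose support is a compact subset of Ω. Then for every ε > 0 there exist an open set A ⊆ Ω and a differential (k−1)-form γ on Ω of class C¹ (i.e. a C¹ map from Ω into the space of alternating (k−1)-linear forms on ℝ^m) such that ℋ^m(A) ≤ ε·ℋ^m(Ω) and ω(x) = (dγ)(x) for every x ∈ Ω ∖ A. -/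
open MeasureTheory

noncomputable section

/-- Euclidean space `ℝ^m`. -/
abbrev E (m : ℕ) := EuclideanSpace ℝ (Fin m)

/-- The space of (continuous) `k`-linear forms on `ℝ^m`; a differential `k`-form on an
open subset of `ℝ^m` is a map into the alternating elements of this space. -/
abbrev FormSpace (m k : ℕ) := ContinuousMultilinearMap ℝ (fun _ : Fin k => E m) ℝ

/-- A `k`-linear form is alternating. -/
def IsAlt {m k : ℕ} (f : FormSpace m k) : Prop :=
  ∀ (v : Fin k → E m) (i j : Fin k), v i = v j → i ≠ j → f v = 0

/-- The exterior derivative of a (`C¹`) differential `k`-form `γ` at `x`: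
`dγ(x)(v₀, …, v_k) = ∑ᵢ (−1)ⁱ (∂_{vᵢ}γ)(x)(v₀, …, v̂ᵢ, …, v_k)`, obtained as
`(k!)⁻¹` times the alternatization of the uncurried derivative of `γ`. -/
def extDerivAt {m k : ℕ} (γ : E m → FormSpace m k) (x : E m) :
    E m [⋀^Fin (k + 1)]→ₗ[ℝ] ℝ :=
  ((k.factorial : ℝ)⁻¹) •
    MultilinearMap.alternatization ((fderiv ℝ γ x).uncurryLeft.toMultilinearMap)

section LusinGradient

open scoped ContDiff ENNReal

theorem eq_of_cos_gt_cos_pi_div {N : ℕ} (hN : 0 < N) {x : ℝ} {k l : Fin N}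
    (hk : Real.cos (Real.pi / N) < Real.cos (2 * Real.pi * (x + k / N)))
    (hl : Real.cos (Real.pi / N) < Real.cos (2 * Real.pi * (x + l / N))) : k = l := by
  have hN' : (0 : ℝ) < N := by exact_mod_cast hN
  have key : ∀ y : ℝ, Real.cos (Real.pi / N) < Real.cos (2 * Real.pi * y) →
      |y - round y| < 1 / (2 * N) := by
    intro y hy
    have h1 : Real.cos (2 * Real.pi * y) = Real.cos (2 * Real.pi * |y - round y|) := by
      rw [← Real.cos_abs (2 * Real.pi * |y - round y|), abs_mul, abs_abs, ← abs_mul, Real.cos_abs,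
        ← Real.cos_sub_int_mul_two_pi _ (round y)]
      ring_nf
    rw [h1] at hy
    have h2 := abs_sub_round y
    by_contra! h
    refine absurd hy (not_lt.mpr (Real.cos_le_cos_of_nonneg_of_le_pi (by positivity) ?_ ?_))
    · nlinarith [Real.pi_pos]
    · calc Real.pi / N = 2 * Real.pi * (1 / (2 * N)) := by field_simp
        _ ≤ _ := by gcongr
  have h1 := key _ hk
  have h2 := key _ hl
  set a := round (x + (k : ℝ) / N)
  set b := round (x + (l : ℝ) / N)
  have h3 : |(k : ℝ) - l - N * (a - b)| < 1 := by
    have : (k : ℝ) - l - N * (a - b) = N * ((x + k / N - a) - (x + l / N - b)) := by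
      field_simp; ring
    rw [this, abs_mul, abs_of_pos hN']
    calc N * |(x + k / N - a) - (x + l / N - b)|
        ≤ N * (|x + k / N - a| + |x + l / N - b|) := by gcongr; exact abs_sub _ _
      _ < N * (1 / (2 * N) + 1 / (2 * N)) := by gcongr
      _ = 1 := by field_simp; norm_num
  have h4 : |((k : ℕ) : ℤ) - (l : ℕ) - N * (a - b)| < 1 := by exact_mod_cast h3
  rw [Int.abs_lt_one_iff] at h4
  have h5 : ((k : ℕ) : ℤ) ≡ (l : ℕ) [ZMOD N] := by
    rw [Int.modEq_comm]
    exact Int.modEq_iff_dvd.mpr ⟨a - b, by linarith⟩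
  rw [Int.natCast_modEq_iff] at h5
  exact Fin.ext (h5.eq_of_lt_of_lt k.2 l.2)

/-- A bounded smooth function whose derivative is bounded, and equal to `1` off a set `B` that has
`N` pairwise disjoint translates. -/
theorem exists_smooth_sawtooth {N : ℕ} (hN : 0 < N) :
    ∃ (s : ℝ → ℝ) (B : Set ℝ) (K M : ℝ), ContDiff ℝ ∞ s ∧ MeasurableSet B ∧
      (∀ x, |s x| ≤ K) ∧ (∀ x, |deriv s x| ≤ M) ∧ (∀ x ∉ B, deriv s x = 1) ∧
      ∀ (x : ℝ) (k l : Fin N), x + k / N ∈ B → x + l / N ∈ B → k = l := by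
  have hN' : (0 : ℝ) < N := by exact_mod_cast hN
  set c := Real.cos (Real.pi / N)
  have hc : c < 1 := by
    have hp : 0 < Real.pi / N := by positivity
    have : Real.pi / N ≤ Real.pi :=
      div_le_self Real.pi_pos.le (by exact_mod_cast hN)
    simpa using Real.cos_lt_cos_of_nonneg_of_le_pi le_rfl this hp
  let g : ℝ → ℝ := fun x => Real.smoothTransition (Real.cos (2 * Real.pi * x) - c)
  have hg : ContDiff ℝ ∞ g := by
    apply Real.smoothTransition.contDiff.comp
    fun_prop
  have hgp : Function.Periodic g 1 := by
    intro x
    simp only [g]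
    rw [mul_add, mul_one, Real.cos_add_two_pi]
  have hI : 0 < ∫ x in (0 : ℝ)..1, g x := by
    refine intervalIntegral.integral_pos one_pos hg.continuous.continuousOn
      (fun x _ => Real.smoothTransition.nonneg _) ⟨0, by simp, ?_⟩
    apply Real.smoothTransition.pos_of_pos
    simpa using hc
  set I := ∫ x in (0 : ℝ)..1, g x
  let q : ℝ → ℝ := fun x => 1 - g x / I
  have hq : ContDiff ℝ ∞ q := by fun_prop
  have hqp : Function.Periodic q 1 := fun x => by simp only [q, hgp x]
  have hqi : ∫ x in (0 : ℝ)..1, q x = 0 := by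
    simp only [q]
    rw [intervalIntegral.integral_sub (by simp)
      ((hg.continuous.div_const _).intervalIntegrable _ _), intervalIntegral.integral_div]
    simp [I, div_self hI.ne']
  let s : ℝ → ℝ := fun x => ∫ t in (0 : ℝ)..x, q t
  have hs : ∀ x, HasDerivAt s (q x) x := fun x => hq.continuous.integral_hasStrictDerivAt 0 x
    |>.hasDerivAt
  have hds : deriv s = q := funext fun x => (hs x).deriv
  have hsp : Function.Periodic s 1 := by
    intro x
    have h := hqp.intervalIntegral_add_eq x 0
    rw [zero_add, hqi] at h
    simp only [s]
    rw [← intervalIntegral.integral_add_adjacent_intervals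
      (hq.continuous.intervalIntegrable 0 x) (hq.continuous.intervalIntegrable x (x + 1)), h,
      add_zero]
  have hsc : ContDiff ℝ ∞ s :=
    contDiff_infty_iff_deriv.mpr ⟨fun x => (hs x).differentiableAt, hds ▸ hq⟩
  obtain ⟨K, hK⟩ := (hsp.isBounded_of_continuous one_ne_zero hsc.continuous).exists_norm_le
  obtain ⟨M, hM⟩ := (hqp.isBounded_of_continuous one_ne_zero hq.continuous).exists_norm_le
  refine ⟨s, {x | c < Real.cos (2 * Real.pi * x)}, K, M, hsc,
    (isOpen_lt (by fun_prop) (by fun_prop)).measurableSet, fun x => hK _ ⟨x, rfl⟩,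
    fun x => hds ▸ hM _ ⟨x, rfl⟩, ?_, fun x k l hk hl => eq_of_cos_gt_cos_pi_div hN hk hl⟩
  intro x hx
  have : g x = 0 := Real.smoothTransition.zero_of_nonpos (by simpa using hx)
  simp [hds, q, this]

/-- Among finitely many pairwise disjoint measurable sets, one is at most of average measure. -/
theorem exists_measure_inter_le_div {α : Type*} [MeasurableSpace α] (μ : Measure α) {N : ℕ}
    (hN : 0 < N) (S : Set α) (B : Fin N → Set α) (hB : ∀ k, MeasurableSet (B k))
    (hd : Pairwise (Function.onFun Disjoint B)) : ∃ k, μ (S ∩ B k) ≤ μ S / N := by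
  by_contra! h
  have : Nonempty (Fin N) := ⟨⟨0, hN⟩⟩
  have h1 : ∑ k, μ (S ∩ B k) ≤ μ S := by
    have := tsum_meas_le_meas_iUnion_of_disjoint₀ (μ.restrict S)
      (fun k => (hB k).nullMeasurableSet) (fun i j hij => (hd hij).aedisjoint)
    rw [tsum_fintype] at this
    simp_rw [Measure.restrict_apply (hB _)] at this
    simp_rw [Set.inter_comm S]
    refine this.trans ((measure_mono (Set.subset_univ _)).trans ?_)
    simp
  have h2 : ∑ _k : Fin N, μ S / N < ∑ k, μ (S ∩ B k) :=
    ENNReal.sum_lt_sum_of_nonempty Finset.univ_nonempty fun k _ => h k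
  rw [Finset.sum_const, Finset.card_univ, Fintype.card_fin, nsmul_eq_mul,
    ENNReal.mul_div_cancel (by exact_mod_cast hN.ne') (by simp)] at h2
  exact absurd h1 (not_le.mpr h2)

/-- Approximate primitive of a smooth compactly supported field of linear maps, off a set of small
measure. The constant `M` controlling the size of the derivative depends only on the proportion `η`
of the exceptional set, not on the precision `δ`. -/
theorem exists_approx_primitive {ι F : Type*} [Fintype ι] [NormedAddCommGroup F]
    [NormedSpace ℝ F] (μ : Measure (EuclideanSpace ℝ ι)) {η : ℝ≥0∞} (hη : η ≠ 0) :
    ∃ M : ℝ, 0 ≤ M ∧ ∀ f : EuclideanSpace ℝ ι → EuclideanSpace ℝ ι →L[ℝ] F,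
      ContDiff ℝ ∞ f → HasCompactSupport f → ∀ δ : ℝ, 0 < δ →
      ∃ u : EuclideanSpace ℝ ι → F, ContDiff ℝ ∞ u ∧ tsupport u ⊆ tsupport f ∧
        (∀ x, ‖u x‖ ≤ δ) ∧
        (∀ C, (∀ x, ‖f x‖ ≤ C) → ∀ x, ‖fderiv ℝ u x‖ ≤ M * C + δ) ∧
        μ {x | δ < ‖f x - fderiv ℝ u x‖} ≤ η * μ (tsupport f) := by
  classical
  obtain ⟨N, hNη⟩ := ENNReal.exists_nat_mul_gt hη (ENNReal.natCast_ne_top (Fintype.card ι))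
  have hN : 0 < N := by
    rcases Nat.eq_zero_or_pos N with rfl | h
    · simp at hNη
    · exact h
  obtain ⟨s, B, K, M, hs, hB, hK, hM, hsB, hdisj⟩ := exists_smooth_sawtooth hN
  have hK0 : 0 ≤ K := (abs_nonneg _).trans (hK 0)
  have hM0 : 0 ≤ M := (abs_nonneg _).trans (hM 0)
  refine ⟨Fintype.card ι * M, by positivity, fun f hf hfc δ hδ => ?_⟩
  have hfd : ∀ x, HasFDerivAt f (fderiv ℝ f x) x := fun x =>
    (hf.differentiable (by simp) x).hasFDerivAt
  obtain ⟨C₀, hC₀⟩ := hf.continuous.bounded_above_of_compact_support hfc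
  obtain ⟨L, hL⟩ := (hf.continuous_fderiv (by simp)).bounded_above_of_compact_support
    (hfc.fderiv (𝕜 := ℝ))
  have hC₀0 : 0 ≤ C₀ := (norm_nonneg _).trans (hC₀ 0)
  have hL0 : 0 ≤ L := (norm_nonneg _).trans (hL 0)
  obtain ⟨h, hh, hhC, hhL⟩ : ∃ h : ℝ, 0 < h ∧ Fintype.card ι * (h * K * C₀) ≤ δ ∧
      Fintype.card ι * (h * K * L) ≤ δ := by
    refine ⟨δ / (1 + Fintype.card ι * (K * (C₀ + L))), by positivity, ?_, ?_⟩
    all_goals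
      rw [div_mul_eq_mul_div, div_mul_eq_mul_div, ← mul_div_assoc, div_le_iff₀ (by positivity)]
    · have : 0 ≤ δ * (Fintype.card ι * (K * L)) := by positivity
      linarith
    · have : 0 ≤ δ * (Fintype.card ι * (K * C₀)) := by positivity
      linarith
  let bad : ι → Fin N → Set (EuclideanSpace ℝ ι) := fun i k => {x | x i / h + k / N ∈ B}
  have hbad : ∀ i k, MeasurableSet (bad i k) := fun i k => by
    have : Continuous fun x : EuclideanSpace ℝ ι => x i / h + k / N := by fun_prop
    exact this.measurable hB
  have hk : ∀ i, ∃ k, μ (tsupport f ∩ bad i k) ≤ μ (tsupport f) / N := fun i =>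
    exists_measure_inter_le_div μ hN _ _ (hbad i) fun k l hkl =>
      Set.disjoint_left.mpr fun x hx hx' => hkl (hdisj _ _ _ hx hx')
  choose k hk using hk
  let e : ι → EuclideanSpace ℝ ι := fun i => EuclideanSpace.single i 1
  have he : ∀ i, ‖e i‖ = 1 := fun i => by simp [e]
  let τ : ι → EuclideanSpace ℝ ι → ℝ := fun i x => x i / h + k i / N
  let p : ι → EuclideanSpace ℝ ι →L[ℝ] ℝ := fun i => EuclideanSpace.proj i
  have hp : ∀ i, ‖p i‖ ≤ 1 := fun i =>
    ContinuousLinearMap.opNorm_le_bound _ zero_le_one fun x => by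
      simpa [p] using PiLp.norm_apply_le x i
  let u : EuclideanSpace ℝ ι → F := fun x => ∑ i, (h * s (τ i x)) • f x (e i)
  let W : EuclideanSpace ℝ ι → EuclideanSpace ℝ ι →L[ℝ] F := fun x =>
    ∑ i, (h * s (τ i x)) • (fderiv ℝ f x).flip (e i)
  let V : EuclideanSpace ℝ ι → EuclideanSpace ℝ ι →L[ℝ] F := fun x =>
    ∑ i, (deriv s (τ i x) • p i).smulRight (f x (e i))
  have hu : ∀ x, fderiv ℝ u x = W x + V x := by
    intro x
    simp only [W, V]
    rw [← Finset.sum_add_distrib]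
    refine (HasFDerivAt.fun_sum fun i _ => ?_).fderiv
    have h1 : HasFDerivAt (τ i) (h⁻¹ • p i) x := by
      have := (((p i).hasFDerivAt (x := x)).const_mul h⁻¹).add_const (k i / N : ℝ)
      refine this.congr_of_eventuallyEq (Filter.Eventually.of_forall fun y => ?_)
      simp [τ, p, div_eq_inv_mul]
    have h2 : HasFDerivAt (fun y => h * s (τ i y)) (deriv s (τ i x) • p i) x := by
      have h3 : HasDerivAt s (deriv s (τ i x)) (τ i x) :=
        (hs.differentiable (by simp) _).hasDerivAt
      refine ((h3.comp_hasFDerivAt x h1).const_mul h).congr_fderiv ?_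
      rw [smul_smul, smul_smul]
      congr 1
      field_simp
    have h4 : HasFDerivAt (fun y => f y (e i)) ((fderiv ℝ f x).flip (e i)) x := by
      refine ((hfd x).clm_apply (hasFDerivAt_const (e i) x)).congr_fderiv ?_
      ext v
      simp
    exact h2.smul h4
  have hW : ∀ x, ‖W x‖ ≤ δ := by
    intro x
    refine (norm_sum_le_of_le (f := fun i => (h * s (τ i x)) • (fderiv ℝ f x).flip (e i))
      Finset.univ (n := fun _ => h * K * L) fun i _ => ?_).trans ?_
    · rw [norm_smul, norm_mul, Real.norm_of_nonneg hh.le]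
      have h1 : ‖(fderiv ℝ f x).flip (e i)‖ ≤ L := by
        refine (ContinuousLinearMap.le_opNorm _ _).trans ?_
        rw [he, mul_one, ContinuousLinearMap.opNorm_flip]
        exact hL x
      have h2 : ‖s (τ i x)‖ ≤ K := hK _
      gcongr
    · simpa using hhL
  refine ⟨u, ?_, ?_, ?_, ?_, ?_⟩
  · refine ContDiff.sum fun i _ => ?_
    have h1 : ContDiff ℝ ∞ (τ i) := by fun_prop
    exact (contDiff_const.mul (hs.comp h1)).smul (hf.clm_apply contDiff_const)
  · refine closure_mono fun x hx hfx => hx ?_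
    simp [u, hfx]
  · intro x
    refine (norm_sum_le_of_le (f := fun i => (h * s (τ i x)) • f x (e i))
      Finset.univ (n := fun _ => h * K * C₀) fun i _ => ?_).trans ?_
    · rw [norm_smul, norm_mul, Real.norm_of_nonneg hh.le]
      have h1 : ‖f x (e i)‖ ≤ C₀ := by
        refine (ContinuousLinearMap.le_opNorm _ _).trans ?_
        rw [he, mul_one]
        exact hC₀ x
      have h2 : ‖s (τ i x)‖ ≤ K := hK _
      gcongr
    · simpa using hhC
  · intro C hC x
    have hV : ‖V x‖ ≤ Fintype.card ι * M * C := by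
      refine (norm_sum_le_of_le (f := fun i => (deriv s (τ i x) • p i).smulRight (f x (e i)))
        Finset.univ (n := fun _ => M * 1 * C) fun i _ => ?_).trans ?_
      · rw [ContinuousLinearMap.norm_smulRight_apply, norm_smul]
        have h1 : ‖f x (e i)‖ ≤ C := by
          refine (ContinuousLinearMap.le_opNorm _ _).trans ?_
          rw [he, mul_one]
          exact hC x
        have h2 : ‖deriv s (τ i x)‖ ≤ M := hM _
        have h3 := hp i
        gcongr
      · simp [mul_assoc]
    rw [hu, add_comm]
    exact (norm_add_le _ _).trans (add_le_add hV (hW x))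
  · have hsub : {x | δ < ‖f x - fderiv ℝ u x‖} ⊆ ⋃ i, tsupport f ∩ bad i (k i) := by
      intro x hx
      by_contra hx'
      rw [Set.mem_ofPred_eq] at hx
      simp only [Set.mem_iUnion, not_exists, Set.mem_inter_iff, not_and] at hx'
      refine absurd hx (not_lt.mpr ?_)
      have hVx : V x = f x := by
        ext v
        have hv : v = ∑ i, v i • e i := by
          ext j
          simp [e, Pi.single_apply]
        conv_rhs => rw [hv, map_sum]
        simp only [V, sum_apply]
        refine Finset.sum_congr rfl fun i _ => ?_
        by_cases hxs : x ∈ tsupport f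
        · have := hsB _ (hx' i hxs)
          simp [τ, this, p]
        · simp [image_eq_zero_of_notMem_tsupport hxs]
      rw [hu, hVx]
      simpa using hW x
    calc μ {x | δ < ‖f x - fderiv ℝ u x‖}
        ≤ ∑ i, μ (tsupport f ∩ bad i (k i)) :=
          (measure_mono hsub).trans (measure_iUnion_fintype_le _ _)
      _ ≤ ∑ _i : ι, μ (tsupport f) / N := Finset.sum_le_sum fun i _ => hk i
      _ = Fintype.card ι / N * μ (tsupport f) := by
          rw [Finset.sum_const, Finset.card_univ, nsmul_eq_mul, div_eq_mul_inv, div_eq_mul_inv]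
          ring
      _ ≤ η * μ (tsupport f) := by
          gcongr
          exact ENNReal.div_le_of_le_mul' hNη.le

/-- One step of the correction scheme: after subtracting the derivative of an approximate primitive,
the remainder can be truncated smoothly to size `2 * δ`, changing it only on a set of small
measure. -/
theorem exists_approx_primitive_remainder {ι F : Type*} [Fintype ι] [NormedAddCommGroup F]
    [NormedSpace ℝ F] [FiniteDimensional ℝ F] (μ : Measure (EuclideanSpace ℝ ι)) {η : ℝ≥0∞}
    (hη : η ≠ 0) :
    ∃ M : ℝ, 0 ≤ M ∧ ∀ f : EuclideanSpace ℝ ι → EuclideanSpace ℝ ι →L[ℝ] F,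
      ContDiff ℝ ∞ f ∧ HasCompactSupport f → ∀ δ : ℝ, 0 < δ →
      ∃ (u : EuclideanSpace ℝ ι → F) (g : EuclideanSpace ℝ ι → EuclideanSpace ℝ ι →L[ℝ] F)
        (A : Set (EuclideanSpace ℝ ι)),
        (ContDiff ℝ ∞ g ∧ HasCompactSupport g) ∧ tsupport g ⊆ tsupport f ∧
        (∀ x, ‖g x‖ ≤ 2 * δ) ∧ ContDiff ℝ ∞ u ∧ (∀ x, ‖u x‖ ≤ δ) ∧
        (∀ C, (∀ x, ‖f x‖ ≤ C) → ∀ x, ‖fderiv ℝ u x‖ ≤ M * C + δ) ∧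
        IsOpen A ∧ A ⊆ tsupport f ∧ μ A ≤ η * μ (tsupport f) ∧
        ∀ x ∉ A, g x = f x - fderiv ℝ u x := by
  obtain ⟨M, hM, H⟩ := exists_approx_primitive (F := F) μ hη
  refine ⟨M, hM, fun f ⟨hf, hfc⟩ δ hδ => ?_⟩
  obtain ⟨u, hu, hsupp, huδ, hdu, hμ⟩ := H f hf hfc δ hδ
  let r : EuclideanSpace ℝ ι → EuclideanSpace ℝ ι →L[ℝ] F := fun x => f x - fderiv ℝ u x
  have hr : ContDiff ℝ ∞ r := hf.sub (hu.fderiv_right (by simp))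
  have hr0 : ∀ x ∉ tsupport f, r x = 0 := fun x hx => by
    have h1 : x ∉ tsupport (fderiv ℝ u) := fun h => hx (hsupp (tsupport_fderiv_subset ℝ h))
    simp [r, image_eq_zero_of_notMem_tsupport hx, image_eq_zero_of_notMem_tsupport h1]
  let χ : ContDiffBump (0 : EuclideanSpace ℝ ι →L[ℝ] F) := ⟨δ, 2 * δ, hδ, by linarith⟩
  let g : EuclideanSpace ℝ ι → EuclideanSpace ℝ ι →L[ℝ] F := fun x => χ (r x) • r x
  have hg0 : Function.support g ⊆ tsupport f := fun x hx => by
    by_contra h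
    exact hx (by simp [g, hr0 x h])
  refine ⟨u, g, {x | δ < ‖r x‖}, ⟨(χ.contDiff.comp hr).smul hr, hfc.mono' hg0⟩,
    closure_minimal hg0 (isClosed_tsupport f), fun x => ?_, hu, huδ, hdu,
    isOpen_lt continuous_const hr.continuous.norm, fun x hx => ?_, hμ, fun x hx => ?_⟩
  · simp only [g]
    rw [norm_smul, Real.norm_of_nonneg χ.nonneg]
    rcases le_total (2 * δ) ‖r x‖ with h | h
    · rw [χ.zero_of_le_dist (by simpa using h)]
      simp [hδ.le]
    · exact (mul_le_of_le_one_left (norm_nonneg _) χ.le_one).trans h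
  · by_contra h
    rw [Set.mem_ofPred_eq, hr0 x h, norm_zero] at hx
    exact hx.not_gt hδ
  · have : χ (r x) = 1 := χ.one_of_mem_closedBall (by simpa using hx)
    simp [g, this, r]

/-- Lusin-type theorem for gradients: a smooth compactly supported field of linear maps coincides
with the derivative of a `C¹` map off an open set of small measure. -/
theorem exists_contDiff_fderiv_eq_off_small {ι F : Type*} [Fintype ι] [NormedAddCommGroup F]
    [NormedSpace ℝ F] [FiniteDimensional ℝ F] (μ : Measure (EuclideanSpace ℝ ι)) {η : ℝ≥0∞}
    (hη : η ≠ 0) {f : EuclideanSpace ℝ ι → EuclideanSpace ℝ ι →L[ℝ] F} (hf : ContDiff ℝ ∞ f)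
    (hfc : HasCompactSupport f) :
    ∃ (A : Set (EuclideanSpace ℝ ι)) (γ : EuclideanSpace ℝ ι → F), IsOpen A ∧ A ⊆ tsupport f ∧
      ContDiff ℝ 1 γ ∧ μ A ≤ η * μ (tsupport f) ∧ ∀ x ∉ A, fderiv ℝ γ x = f x := by
  have : CompleteSpace F := FiniteDimensional.complete ℝ F
  obtain ⟨η', hη', hsum⟩ := ENNReal.exists_pos_sum_of_countable' hη ℕ
  choose M hM H using fun n => exists_approx_primitive_remainder (F := F) μ (hη' n).ne'
  let δ : ℕ → ℝ := fun n => (1 / 2) ^ n / (1 + M (n + 1))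
  have hδ : ∀ n, 0 < δ n := fun n => by have := hM (n + 1); positivity
  have hδ₁ : ∀ n, δ n ≤ (1 / 2) ^ n := fun n =>
    div_le_self (by positivity) (by linarith [hM (n + 1)])
  have hδ₂ : ∀ n, M (n + 1) * δ n ≤ (1 / 2) ^ n := fun n => by
    have := hM (n + 1)
    simp only [δ]
    rw [← mul_div_assoc, div_le_iff₀ (by positivity)]
    have : (0 : ℝ) ≤ (1 / 2) ^ n := by positivity
    linarith
  choose u g A hg hgf hgδ hu huδ hdu hAo hAf hμA hgA using
    fun (n : ℕ) (f : {f : EuclideanSpace ℝ ι → EuclideanSpace ℝ ι →L[ℝ] F //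
      ContDiff ℝ ∞ f ∧ HasCompactSupport f}) => H n f.1 f.2 (δ n) (hδ n)
  let φ : ℕ → {f : EuclideanSpace ℝ ι → EuclideanSpace ℝ ι →L[ℝ] F //
      ContDiff ℝ ∞ f ∧ HasCompactSupport f} :=
    fun n => Nat.rec ⟨f, hf, hfc⟩ (fun n f => ⟨g n f, hg n f⟩) n
  have hφ : ∀ n, (φ (n + 1)).1 = g n (φ n) := fun _ => rfl
  have hφf : ∀ n, tsupport (φ n).1 ⊆ tsupport f := fun n => by
    induction n with
    | zero => exact subset_rfl
    | succ n ih => exact (hgf n (φ n)).trans ih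
  obtain ⟨C, hC⟩ := hf.continuous.bounded_above_of_compact_support hfc
  obtain ⟨v, hv, hvb⟩ : ∃ v : ℕ → ℝ, Summable v ∧ ∀ n x, ‖fderiv ℝ (u n (φ n)) x‖ ≤ v n := by
    refine ⟨fun n => Nat.casesOn n (M 0 * C + δ 0) fun n => 3 * (1 / 2) ^ n, ?_, fun n => ?_⟩
    · rw [← summable_nat_add_iff 1]
      exact summable_geometric_two.mul_left 3
    · cases n with
      | zero => exact hdu 0 (φ 0) C hC
      | succ n =>
        intro x
        have h1 := hdu (n + 1) (φ (n + 1)) (2 * δ n) (hgδ n (φ n)) x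
        have h2 := hδ₁ (n + 1)
        have h3 : ((1 : ℝ) / 2) ^ (n + 1) ≤ (1 / 2) ^ n :=
          pow_le_pow_of_le_one (by norm_num) (by norm_num) n.le_succ
        have h4 := hδ₂ n
        change _ ≤ 3 * (1 / 2 : ℝ) ^ n
        linarith
  have hw : ∀ n x, ‖u n (φ n) x‖ ≤ (1 / 2) ^ n := fun n x => (huδ n _ x).trans (hδ₁ n)
  have hγ : ∀ x, fderiv ℝ (fun y => ∑' n, u n (φ n) y) x = ∑' n, fderiv ℝ (u n (φ n)) x := fun x =>
    fderiv_tsum_apply hv (fun n => (hu n _).differentiable (by simp)) hvb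
      (x₀ := 0) (.of_norm_bounded summable_geometric_two fun n => hw n 0) x
  refine ⟨⋃ n, A n (φ n), fun x => ∑' n, u n (φ n) x, isOpen_iUnion fun n => hAo n _,
    Set.iUnion_subset fun n => (hAf n _).trans (hφf n), ?_, ?_, fun x hx => ?_⟩
  · refine contDiff_one_iff_fderiv.mpr ⟨differentiable_tsum hv
      (fun n x => ((hu n (φ n)).differentiable (by simp) x).hasFDerivAt) hvb, ?_⟩
    rw [funext hγ]
    exact continuous_tsum (fun n => (hu n (φ n)).continuous_fderiv (by simp)) hv hvb
  · calc μ (⋃ n, A n (φ n)) ≤ ∑' n, μ (A n (φ n)) := measure_iUnion_le _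
      _ ≤ ∑' n, η' n * μ (tsupport f) := by
          refine ENNReal.tsum_le_tsum fun n => (hμA n _).trans ?_
          gcongr
          exact hφf n
      _ ≤ η * μ (tsupport f) := by
          rw [ENNReal.tsum_mul_right]
          gcongr
  · rw [hγ]
    simp only [Set.mem_iUnion, not_exists] at hx
    have hpart : ∀ n, ∑ i ∈ Finset.range n, fderiv ℝ (u i (φ i)) x = f x - (φ n).1 x := fun n => by
      induction n with
      | zero => simp [φ]
      | succ n ih =>
        rw [Finset.sum_range_succ, ih, hφ, hgA n (φ n) x (hx n)]
        abel
    have hlim : Filter.Tendsto (fun n => (φ n).1 x) Filter.atTop (nhds 0) := by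
      rw [← Filter.tendsto_add_atTop_iff_nat 1]
      refine squeeze_zero_norm (a := fun n => 2 * (1 / 2 : ℝ) ^ n)
        (fun n => (hgδ n (φ n) x).trans (by linarith [hδ₁ n])) ?_
      simpa using (tendsto_pow_atTop_nhds_zero_of_lt_one (r := (1 / 2 : ℝ))
        (by norm_num) (by norm_num)).const_mul 2
    have hs : Summable fun n => fderiv ℝ (u n (φ n)) x := .of_norm_bounded hv fun n => hvb n x
    refine tendsto_nhds_unique hs.hasSum.tendsto_sum_nat ?_
    simp_rw [hpart]
    simpa using hlim.const_sub (f x)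

end LusinGradient

instance finiteDimensional_formSpace (m k : ℕ) : FiniteDimensional ℝ (FormSpace m k) :=
  FiniteDimensional.of_injective
    (ContinuousMultilinearMap.toMultilinearMapLinear :
      FormSpace m k →ₗ[ℝ] MultilinearMap ℝ (fun _ : Fin k => E m) ℝ)
    ContinuousMultilinearMap.toMultilinearMap_injective

/-- The subspace of alternating forms. -/
def altForms (m k : ℕ) : Submodule ℝ (FormSpace m k) where
  carrier := {f | IsAlt f}
  add_mem' hf hg v i j hv hij := by simp [hf v i j hv hij, hg v i j hv hij]
  zero_mem' _ _ _ _ _ := rfl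
  smul_mem' c f hf v i j hv hij := by simp [hf v i j hv hij]

theorem IsAlt.curryLeft {m k : ℕ} {f : FormSpace m (k + 1)} (hf : IsAlt f) (v : E m) :
    IsAlt (f.curryLeft v) := fun w i j hw hij =>
  hf (Fin.cons v w) i.succ j.succ (by simpa using hw) (by simpa using hij)

theorem IsAlt.alternatization {m k : ℕ} {f : FormSpace m k} (hf : IsAlt f) :
    (MultilinearMap.alternatization f.toMultilinearMap).toMultilinearMap =
      (k.factorial : ℝ) • f.toMultilinearMap := by
  let a : E m [⋀^Fin k]→ₗ[ℝ] ℝ := { f.toMultilinearMap with map_eq_zero_of_eq' := hf }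
  have h : MultilinearMap.alternatization f.toMultilinearMap = _ := a.coe_alternatization
  rw [h, Fintype.card_fin]
  ext v
  have hav : a v = f v := rfl
  simp [hav]

/-- **Differential forms are nearly exact** (Moonens–Pfeffer; Euclidean case). Let
`m ≥ 2`, `1 ≤ k = j + 1 ≤ m`, let `Ω ⊆ ℝ^m` be open with finite measure, and let `ω` be
a smooth `k`-form on `ℝ^m` compactly supported in `Ω`. For every `ε > 0` there are an
open `A ⊆ Ω` and a `C¹` differential `(k−1)`-form `γ` on `Ω` with
`ℋ^m(A) ≤ ε ℋ^m(Ω)` and `ω = dγ` pointwise on `Ω ∖ A`. -/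
theorem forms_nearly_exact_euclidean (m j : ℕ) (hm : 2 ≤ m) (hk : j + 1 ≤ m)
    (Ω : Set (E m)) (hΩ : IsOpen Ω) (hfin : μH[m] Ω ≠ ⊤)
    (ω : E m → FormSpace m (j + 1)) (hωalt : ∀ x, IsAlt (ω x))
    (hω : ContDiff ℝ (⊤ : ℕ∞) ω) (hsupp : HasCompactSupport ω) (hsub : tsupport ω ⊆ Ω)
    (ε : ℝ) (hε : 0 < ε) :
    ∃ (A : Set (E m)) (γ : E m → FormSpace m j), IsOpen A ∧ A ⊆ Ω ∧
      ContDiffOn ℝ 1 γ Ω ∧ (∀ x ∈ Ω, IsAlt (γ x)) ∧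
      μH[m] A ≤ ENNReal.ofReal ε * μH[m] Ω ∧
      ∀ x ∈ Ω \ A, (ω x).toMultilinearMap = (extDerivAt γ x).toMultilinearMap := by
  let L : FormSpace m (j + 1) →L[ℝ] (E m →L[ℝ] FormSpace m j) :=
    ((j + 1 : ℝ)⁻¹) •
      (continuousMultilinearCurryLeftEquiv ℝ (fun _ : Fin (j + 1) => E m) ℝ).toContinuousLinearEquiv
  have hL : ∀ x v, L (ω x) v = ((j + 1 : ℝ)⁻¹) • (ω x).curryLeft v := fun _ _ => rfl
  have hts : tsupport (fun x => L (ω x)) ⊆ tsupport ω :=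
    tsupport_comp_subset (map_zero L) ω
  obtain ⟨A, γ, hAo, hA, hγ, hμ, hd⟩ := exists_contDiff_fderiv_eq_off_small
    (μH[m] : Measure (E m)) (ENNReal.ofReal_pos.mpr hε).ne' (L.contDiff.comp hω)
    (hsupp.comp_left (map_zero L))
  obtain ⟨P, hP⟩ := Submodule.ClosedComplemented.of_finiteDimensional (altForms m j)
  let Q : FormSpace m j →L[ℝ] FormSpace m j := (altForms m j).subtypeL ∘L P
  have hQ : ∀ a, IsAlt a → Q a = a := fun a ha => congrArg Subtype.val (hP ⟨a, ha⟩)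
  refine ⟨A, fun x => Q (γ x), hAo, (hA.trans hts).trans hsub, (Q.contDiff.comp hγ).contDiffOn,
    fun x _ => (P (γ x)).2, hμ.trans ?_, fun x hx => ?_⟩
  · gcongr
    exact hts.trans hsub
  · have hfd : fderiv ℝ (fun x => Q (γ x)) x = L (ω x) := by
      refine (Q.hasFDerivAt.comp x (hγ.differentiable (by simp) x).hasFDerivAt).fderiv.trans ?_
      rw [hd x hx.2]
      ext1 v
      exact hQ _ ((altForms m j).smul_mem _ ((hωalt x).curryLeft v))
    have hun : (L (ω x)).uncurryLeft = ((j + 1 : ℝ)⁻¹) • ω x := by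
      ext v
      simp [ContinuousLinearMap.uncurryLeft_apply, hL]
    have hsm : IsAlt (((j + 1 : ℝ)⁻¹) • ω x) := (altForms m (j + 1)).smul_mem _ (hωalt x)
    have key := hsm.alternatization
    rw [← hun] at key
    rw [extDerivAt, hfd, AlternatingMap.coe_smul, key, hun]
    ext v
    have h1 : (j.factorial : ℝ) ≠ 0 := by positivity
    have h2 : (j + 1 : ℝ) ≠ 0 := by positivity
    simp [Nat.factorial_succ]
    field_simp
end
end
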